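/- Let n ≥ 2, let α_1,…,α_n ∈ ℂ with Σ_j |α_j| = 1 and α_j ≠ 0 for all j, let g(z) = α_1 z_1ⁿ + … + α_n z_nⁿ, and define Φ : 𝔻ⁿ → 𝔻ⁿ by Φ(z) = (g(z), g(z), …, g(z), 0) (the first n-1 components equal g(z), the last component is 0). Then for β > -1 the composition operator C_Φ is bounded on A²_β(𝔻ⁿ) if and only if n/2 ≤ β + 5/2. -/

import Mathlib

open MeasureTheory Metric Set ENNReal

noncomputable section

/-- The open unit polydisc in `ℂⁿ`. -/
def polydisc (n : ℕ) : Set (Fin n → ℂ) := {z | ∀ j, ‖z j‖ < 1}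

/-- The closed unit polydisc in `ℂⁿ`. -/
def closedPolydisc (n : ℕ) : Set (Fin n → ℂ) := {z | ∀ j, ‖z j‖ ≤ 1}

/-- The distinguished boundary (torus) of the polydisc. -/
def torus (n : ℕ) : Set (Fin n → ℂ) := {z | ∀ j, ‖z j‖ = 1}

/-- The weighted Bergman measure `V_β` on the polydisc: the product of the measures
`dA_β(z) = (β+1)(1-|z|²)^β dA(z)`, where `dA` is normalized area measure on the unit disc. -/
def Vbeta (n : ℕ) (β : ℝ) : Measure (Fin n → ℂ) :=
  (volume.restrict (polydisc n)).withDensity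
    (fun z => ENNReal.ofReal (∏ j, ((β + 1) * (1 - ‖z j‖ ^ 2) ^ β / Real.pi)))

/-- The composition operator `C_Φ` is bounded on the weighted Bergman space `A²_β(𝔻ⁿ)`. -/
def bddBergman (n : ℕ) (β : ℝ) (Φ : (Fin n → ℂ) → (Fin n → ℂ)) : Prop :=
  ∃ C > (0:ℝ), ∀ f : (Fin n → ℂ) → ℂ, DifferentiableOn ℂ f (polydisc n) →
    ∫⁻ z, ENNReal.ofReal (‖f (Φ z)‖ ^ 2) ∂(Vbeta n β) ≤
      ENNReal.ofReal C * ∫⁻ z, ENNReal.ofReal (‖f z‖ ^ 2) ∂(Vbeta n β)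

/-!
Boundedness of `C_Φ` is a Carleson condition on the measures of the sets `{|g - ζ| < 1 - |ζ|}`.
Since `∑ |α j| = 1`, these sets are, after a rotation, neighbourhoods of points where all the powers
`w j = z j ^ N j` equal `1`. With `δ = 1 - |ζ|`, the inequality `Re (1 - g) ≲ δ` forces
`1 - |w j| ≲ δ` and `|Im (w j)| ≲ √δ` for every `j`, whereas `|Im g| ≲ δ` confines one more
argument to an interval of length `≲ δ`. Hence the measure is of order
`δ ^ (n * (β + 1) + (n - 1) / 2 + 1)`, and the Carleson condition compares this with the order
`δ ^ (m * (β + 2))` of a Carleson box in the `m` coordinates that `g` occupies in `Φ`. The remaining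
coordinates of `Φ` vanish and do not matter.
-/

section Development

open Filter Topology
open scoped Real

/-! ### Product measures -/

section ProductMeasure

variable {n : ℕ} {X : Fin (n + 1) → Type*} [∀ i, MeasurableSpace (X i)]
  (μ : ∀ i, Measure (X i)) [∀ i, SigmaFinite (μ i)]

theorem lintegral_pi_fin_succ {F : (∀ i, X i) → ℝ≥0∞} (hF : Measurable F) :
    ∫⁻ z, F z ∂Measure.pi μ =
      ∫⁻ y, ∫⁻ x, F (Fin.cons x y) ∂μ 0 ∂Measure.pi fun i : Fin n => μ i.succ := by
  have hpres := (measurePreserving_piFinSuccAbove μ 0).symm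
  rw [← hpres.lintegral_comp hF,
    lintegral_prod_symm' (fun p => F ((MeasurableEquiv.piFinSuccAbove X 0).symm p)) (by fun_prop)]
  refine lintegral_congr fun y => lintegral_congr fun x => congrArg F ?_
  exact Fin.insertNth_zero x y

theorem measure_pi_fin_succ {S : Set (∀ i, X i)} (hS : MeasurableSet S) :
    Measure.pi μ S =
      ∫⁻ y, μ 0 {x | Fin.cons x y ∈ S} ∂Measure.pi fun i : Fin n => μ i.succ := by
  have hcons (y) : Measurable fun x : X 0 => (Fin.cons x y : ∀ i, X i) :=
    measurable_pi_iff.2 fun i => Fin.cases (by simpa using measurable_id') (fun _ => by simp) i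
  rw [← lintegral_indicator_one hS, lintegral_pi_fin_succ μ (measurable_one.indicator hS)]
  refine lintegral_congr fun y => ?_
  exact lintegral_indicator_one (hcons y hS)

theorem measure_pi_fin_succ_le {S : Set (∀ i, X i)} (hS : MeasurableSet S)
    {T : ∀ i : Fin n, Set (X i.succ)} (hT : ∀ i, MeasurableSet (T i)) {B : ℝ≥0∞}
    (htail : ∀ x y, Fin.cons x y ∈ S → y ∈ univ.pi T)
    (hslice : ∀ y, μ 0 {x | Fin.cons x y ∈ S} ≤ B) :
    Measure.pi μ S ≤ B * ∏ i : Fin n, μ i.succ (T i) := by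
  rw [measure_pi_fin_succ μ hS, ← Measure.pi_pi, ← setLIntegral_const]
  refine (lintegral_mono fun y => ?_).trans_eq (lintegral_indicator (.univ_pi hT) _)
  by_cases hy : y ∈ univ.pi T
  · rw [indicator_of_mem hy]
    exact hslice y
  · have hempty : {x | Fin.cons x y ∈ S} = ∅ :=
      eq_empty_of_forall_notMem fun x hx => hy (htail x y hx)
    rw [hempty, measure_empty]
    exact zero_le

theorem le_measure_pi_fin_succ {S : Set (∀ i, X i)} (hS : MeasurableSet S)
    {T : ∀ i : Fin n, Set (X i.succ)} (hT : ∀ i, MeasurableSet (T i)) {B : ℝ≥0∞}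
    (hslice : ∀ y ∈ univ.pi T, B ≤ μ 0 {x | Fin.cons x y ∈ S}) :
    B * ∏ i : Fin n, μ i.succ (T i) ≤ Measure.pi μ S := by
  rw [measure_pi_fin_succ μ hS, ← Measure.pi_pi, ← setLIntegral_const]
  exact (setLIntegral_mono' (.univ_pi hT) hslice).trans (setLIntegral_le_lintegral _ _)

end ProductMeasure

theorem lintegral_fin_prod_eq_prod {n : ℕ} {X : Fin n → Type*} [∀ i, MeasurableSpace (X i)]
    (μ : ∀ i, Measure (X i)) [∀ i, SigmaFinite (μ i)] {f : ∀ i, X i → ℝ≥0∞}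
    (hf : ∀ i, Measurable (f i)) :
    ∫⁻ z, ∏ i, f i (z i) ∂Measure.pi μ = ∏ i, ∫⁻ x, f i x ∂μ i := by
  induction n with
  | zero => simp
  | succ n ih =>
    rw [lintegral_pi_fin_succ μ (by fun_prop)]
    simp only [Fin.prod_univ_succ, Fin.cons_zero, Fin.cons_succ]
    simp only [lintegral_mul_const _ (hf 0)]
    rw [lintegral_const_mul _ (by fun_prop), ih _ fun i => hf i.succ]

theorem pi_withDensity {n : ℕ} {X : Fin n → Type*} [∀ i, MeasurableSpace (X i)]
    (μ : ∀ i, Measure (X i)) [∀ i, SigmaFinite (μ i)] {f : ∀ i, X i → ℝ≥0∞}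
    (hf : ∀ i, Measurable (f i)) [∀ i, SigmaFinite ((μ i).withDensity (f i))] :
    Measure.pi (fun i => (μ i).withDensity (f i)) =
      (Measure.pi μ).withDensity fun z => ∏ i, f i (z i) := by
  refine Measure.pi_eq fun s hs => ?_
  have hprod (z : ∀ i, X i) : (univ.pi s).indicator (fun z => ∏ i, f i (z i)) z =
      ∏ i, (s i).indicator (f i) (z i) := by
    by_cases hz : z ∈ univ.pi s
    · rw [indicator_of_mem hz]
      exact Finset.prod_congr rfl fun i _ => (indicator_of_mem (hz i (mem_univ i)) _).symm
    · obtain ⟨i, hi⟩ : ∃ i, z i ∉ s i := by simpa [mem_univ_pi] using hz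
      rw [indicator_of_notMem hz,
        Finset.prod_eq_zero (Finset.mem_univ i) (indicator_of_notMem hi _)]
  rw [withDensity_apply _ (.univ_pi hs), ← lintegral_indicator (.univ_pi hs)]
  simp only [hprod]
  rw [lintegral_fin_prod_eq_prod μ fun i => (hf i).indicator (hs i)]
  simp only [lintegral_indicator (hs _), withDensity_apply _ (hs _)]

/-! ### The weighted area measure of the disc -/

/-- The density `(β+1)(1-|z|²)^β / π` of `dA_β` with respect to Lebesgue measure on the disc. -/
def discDensity (β : ℝ) (z : ℂ) : ℝ≥0∞ := .ofReal ((β + 1) * (1 - ‖z‖ ^ 2) ^ β / π)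

/-- The one-variable weighted area measure `dA_β`, as a measure on `ℂ` carried by the unit disc. -/
def discMeasure (β : ℝ) : Measure ℂ := (volume.restrict (ball 0 1)).withDensity (discDensity β)

/-- The density, in polar coordinates `(r, θ)`, of `dA_β` with respect to `dr dθ`. -/
def radialWeight (β r : ℝ) : ℝ≥0∞ := .ofReal ((β + 1) / π * (1 - r ^ 2) ^ β * r)

@[fun_prop]
theorem measurable_discDensity (β : ℝ) : Measurable (discDensity β) := by
  unfold discDensity
  fun_prop

@[fun_prop]
theorem measurable_radialWeight (β : ℝ) : Measurable (radialWeight β) := by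
  unfold radialWeight
  fun_prop

instance (β : ℝ) : SigmaFinite (discMeasure β) :=
  SigmaFinite.withDensity_of_ne_top (ae_of_all _ fun _ => ofReal_ne_top)

theorem polydisc_eq_pi (n : ℕ) : polydisc n = univ.pi fun _ => ball 0 1 := by
  ext z
  simp [polydisc]

theorem isOpen_polydisc (n : ℕ) : IsOpen (polydisc n) := by
  rw [polydisc_eq_pi]
  exact isOpen_set_pi finite_univ fun _ _ => isOpen_ball

theorem ae_mem_polydisc (n : ℕ) (β : ℝ) : ∀ᵐ z ∂Vbeta n β, z ∈ polydisc n :=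
  (withDensity_absolutelyContinuous _ _).ae_le (ae_restrict_mem (isOpen_polydisc n).measurableSet)

theorem one_sub_sq_norm_pos {E : Type*} [SeminormedAddGroup E] {z : E} (hz : ‖z‖ < 1) :
    0 < 1 - ‖z‖ ^ 2 :=
  sub_pos.2 (pow_lt_one₀ (norm_nonneg z) hz two_ne_zero)

theorem Vbeta_eq_withDensity (n : ℕ) {β : ℝ} (hβ : -1 < β) :
    Vbeta n β =
      (volume.restrict (polydisc n)).withDensity fun z => ∏ j, discDensity β (z j) := by
  refine withDensity_congr_ae ?_
  filter_upwards [ae_restrict_mem (isOpen_polydisc n).measurableSet] with z hz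
  refine ENNReal.ofReal_prod_of_nonneg fun j _ => ?_
  have := one_sub_sq_norm_pos (hz j)
  have : 0 < β + 1 := by linarith
  positivity

theorem Vbeta_eq_pi (n : ℕ) {β : ℝ} (hβ : -1 < β) :
    Vbeta n β = Measure.pi fun _ => discMeasure β := by
  have hsigma : SigmaFinite ((volume.restrict (ball (0 : ℂ) 1)).withDensity (discDensity β)) :=
    inferInstanceAs (SigmaFinite (discMeasure β))
  rw [Vbeta_eq_withDensity n hβ, polydisc_eq_pi, volume_pi, Measure.restrict_pi_pi]
  exact (pi_withDensity _ fun _ => measurable_discDensity β).symm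

theorem discDensity_polarCoord_symm (β : ℝ) (F : ℂ → ℝ≥0∞) {p : ℝ × ℝ}
    (hp : p ∈ polarCoord.target) :
    ENNReal.ofReal p.1 • (ball 0 1).indicator (discDensity β * F) (Complex.polarCoord.symm p) =
      (Ioo 0 1).indicator (radialWeight β) p.1 * F (circleMap 0 p.1 p.2) := by
  have hp0 : 0 < p.1 := hp.1
  have hsymm : Complex.polarCoord.symm p = circleMap 0 p.1 p.2 := by
    rw [Complex.polarCoord_symm_apply, circleMap, Complex.exp_mul_I, zero_add]
    push_cast
    rfl
  have hnorm : ‖circleMap 0 p.1 p.2‖ = p.1 := by rw [norm_circleMap_zero, abs_of_pos hp0]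
  by_cases hp1 : p.1 < 1
  · have hmem : p.1 ∈ Ioo 0 1 := ⟨hp0, hp1⟩
    rw [hsymm, indicator_of_mem (by simpa [hnorm] using hp1), indicator_of_mem hmem,
      smul_eq_mul, Pi.mul_apply, ← mul_assoc, discDensity, hnorm, ← ofReal_mul hp0.le,
      radialWeight]
    congr 2
    ring
  · have hmem : p.1 ∉ Ioo 0 1 := fun h => hp1 h.2
    rw [hsymm, indicator_of_notMem (by simpa [hnorm] using hp1), indicator_of_notMem hmem,
      smul_zero, zero_mul]

theorem lintegral_discMeasure_eq_polar (β : ℝ) {F : ℂ → ℝ≥0∞} (hF : Measurable F) :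
    ∫⁻ z, F z ∂discMeasure β =
      ∫⁻ r in Ioo 0 1, radialWeight β r * ∫⁻ θ in Ioc (-π) π, F (circleMap 0 r θ) := by
  have hcircle : Measurable fun p : ℝ × ℝ => F (circleMap 0 p.1 p.2) :=
    hF.comp (by unfold circleMap; fun_prop)
  have hweight : Measurable fun p : ℝ × ℝ => (Ioo 0 1).indicator (radialWeight β) p.1 :=
    ((measurable_radialWeight β).indicator measurableSet_Ioo).comp measurable_fst
  have hslice (r : ℝ) : Measurable fun θ => F (circleMap 0 r θ) :=
    hcircle.comp measurable_prodMk_left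
  have hpull (r : ℝ) :
      ∫⁻ θ in Ioc (-π) π, (Ioo 0 1).indicator (radialWeight β) r * F (circleMap 0 r θ) =
        (Ioo 0 1).indicator
          (fun r => radialWeight β r * ∫⁻ θ in Ioc (-π) π, F (circleMap 0 r θ)) r := by
    rw [lintegral_const_mul _ (hslice r), indicator_mul_left]
  rw [discMeasure, lintegral_withDensity_eq_lintegral_mul _ (measurable_discDensity β) hF,
    ← lintegral_indicator measurableSet_ball, ← Complex.lintegral_comp_polarCoord_symm,
    setLIntegral_congr_fun polarCoord.open_target.measurableSet
      fun p hp => discDensity_polarCoord_symm β F hp,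
    polarCoord_target, Measure.volume_eq_prod, ← Measure.prod_restrict,
    lintegral_prod (fun p : ℝ × ℝ => _ * _) (hweight.mul hcircle).aemeasurable,
    restrict_Ioo_eq_restrict_Ioc]
  simp only [hpull]
  rw [setLIntegral_indicator measurableSet_Ioo, inter_eq_left.2 Ioo_subset_Ioi_self]

theorem hasDerivAt_radialWeight_primitive (β : ℝ) {r : ℝ} (hr : 0 < 1 - r ^ 2) :
    HasDerivAt (fun r : ℝ => -(1 - r ^ 2) ^ (β + 1) / (2 * π))
      ((β + 1) / π * (1 - r ^ 2) ^ β * r) r := by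
  have hinner : HasDerivAt (fun r : ℝ => 1 - r ^ 2) (-(2 * r)) r := by
    simpa using (hasDerivAt_pow 2 r).const_sub 1
  have houter := (hinner.rpow_const (p := β + 1) (Or.inl hr.ne')).neg.div_const (2 * π)
  rw [add_sub_cancel_right] at houter
  exact houter.congr_deriv (by field_simp)

theorem lintegral_radialWeight {β : ℝ} (hβ : -1 < β) {δ : ℝ} (hδ : 0 ≤ δ) (hδ1 : δ ≤ 1) :
    ∫⁻ r in Ioo (1 - δ) 1, radialWeight β r =
      .ofReal ((2 * δ - δ ^ 2) ^ (β + 1) / (2 * π)) := by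
  have hle : 1 - δ ≤ 1 := by linarith
  have hcont : ContinuousOn (fun r : ℝ => -(1 - r ^ 2) ^ (β + 1) / (2 * π)) (Icc (1 - δ) 1) := by
    have : Continuous fun r : ℝ => (1 - r ^ 2) ^ (β + 1) :=
      Continuous.rpow_const (by fun_prop) fun _ => Or.inr (by linarith)
    exact (this.neg.div_const _).continuousOn
  have hpos : ∀ r ∈ Ioo (1 - δ) 1, 0 < 1 - r ^ 2 := fun r hr => by nlinarith [hr.1, hr.2]
  have hderiv : ∀ r ∈ Ioo (1 - δ) 1, HasDerivAt _ _ r := fun r hr =>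
    hasDerivAt_radialWeight_primitive β (hpos r hr)
  have hnonneg : ∀ r ∈ Ioo (1 - δ) 1, 0 ≤ (β + 1) / π * (1 - r ^ 2) ^ β * r := fun r hr => by
    have := hpos r hr
    have : 0 ≤ r := by linarith [hr.1]
    have : 0 ≤ β + 1 := by linarith
    positivity
  have hint := (intervalIntegral.integrableOn_deriv_of_nonneg hcont hderiv hnonneg)
  have hftc := intervalIntegral.integral_eq_sub_of_hasDerivAt_of_le hle hcont hderiv
    ((intervalIntegrable_iff_integrableOn_Ioc_of_le hle).2 hint)
  rw [intervalIntegral.integral_of_le hle, integral_Ioc_eq_integral_Ioo] at hftc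
  unfold radialWeight
  rw [← ofReal_integral_eq_lintegral_ofReal (hint.mono_set Ioo_subset_Ioc_self)
    (ae_restrict_of_forall_mem measurableSet_Ioo hnonneg), hftc, one_pow, sub_self,
    Real.zero_rpow (by linarith)]
  congr 1
  ring_nf

theorem isProbabilityMeasure_discMeasure {β : ℝ} (hβ : -1 < β) :
    IsProbabilityMeasure (discMeasure β) := by
  have hmass := lintegral_radialWeight hβ zero_le_one le_rfl
  rw [sub_self] at hmass
  constructor
  rw [← lintegral_one, lintegral_discMeasure_eq_polar β measurable_const]
  simp only [lintegral_const, MeasurableSet.univ, Measure.restrict_apply, univ_inter,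
    Real.volume_Ioc, one_mul]
  rw [lintegral_mul_const _ (measurable_radialWeight β), hmass,
    ← ofReal_mul (by norm_num; positivity)]
  norm_num [← two_mul]
  field_simp

theorem isProbabilityMeasure_Vbeta (n : ℕ) {β : ℝ} (hβ : -1 < β) :
    IsProbabilityMeasure (Vbeta n β) := by
  have := isProbabilityMeasure_discMeasure hβ
  rw [Vbeta_eq_pi n hβ]
  infer_instance

/-! ### Images of the area measure under powers -/

theorem lintegral_addCircle_comp_nsmul_add {T : ℝ} [Fact (0 < T)] {f : AddCircle T → ℝ≥0∞}
    (hf : Measurable f) {N : ℕ} (hN : N ≠ 0) (a : AddCircle T) :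
    ∫⁻ x, f (a + N • x) = ∫⁻ x, f x := by
  have hmul : MeasurePreserving fun x : AddCircle T => N • x := by
    simpa only [natCast_zsmul] using
      Measure.measurePreserving_zsmul (volume : Measure (AddCircle T)) (Int.natCast_ne_zero.2 hN)
  exact ((measurePreserving_add_left volume a).comp hmul).lintegral_comp hf

theorem lintegral_circleMap_comp_affine {F : ℂ → ℝ≥0∞} (hF : Measurable F) (ρ φ : ℝ) {N : ℕ}
    (hN : N ≠ 0) :
    ∫⁻ θ in Ioc (-π) π, F (circleMap 0 ρ (φ + N * θ)) =
      ∫⁻ θ in Ioc (-π) π, F (circleMap 0 ρ θ) := by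
  have : Fact (0 < 2 * π) := ⟨Real.two_pi_pos⟩
  let f : AddCircle (2 * π) → ℝ≥0∞ := fun x => F (ρ * AddCircle.toCircle x)
  have hcoe (θ : ℝ) : F (circleMap 0 ρ θ) = f θ := by
    simp only [f, circleMap, zero_add, AddCircle.toCircle_apply_mk,
      div_self Real.two_pi_pos.ne', one_mul, Circle.coe_exp]
  have hf : Measurable f := by
    have : Continuous fun x : AddCircle (2 * π) => (AddCircle.toCircle x : ℂ) :=
      continuous_subtype_val.comp AddCircle.continuous_toCircle
    exact hF.comp (this.measurable.const_mul _)
  have hlift (G : AddCircle (2 * π) → ℝ≥0∞) : ∫⁻ θ in Ioc (-π) π, G θ = ∫⁻ x, G x := by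
    rw [← AddCircle.lintegral_preimage (2 * π) (-π) G]
    ring_nf
  rw [lintegral_congr hcoe, hlift f, ← lintegral_addCircle_comp_nsmul_add hf hN φ, ← hlift]
  refine lintegral_congr fun θ => ?_
  rw [hcoe, AddCircle.coe_add, ← nsmul_eq_mul, AddCircle.coe_nsmul]

/-- The distribution of `e^{iφ} z^N` when `z` is distributed according to `dA_β`. -/
def powMeasure (β φ : ℝ) (N : ℕ) : Measure ℂ :=
  (discMeasure β).map fun z => Complex.exp (φ * Complex.I) * z ^ N

theorem isProbabilityMeasure_powMeasure {β : ℝ} (hβ : -1 < β) (φ : ℝ) (N : ℕ) :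
    IsProbabilityMeasure (powMeasure β φ N) := by
  have := isProbabilityMeasure_discMeasure hβ
  exact Measure.isProbabilityMeasure_map (by fun_prop)

theorem powMeasure_zero_one (β : ℝ) : powMeasure β 0 1 = discMeasure β := by
  simp [powMeasure]

theorem lintegral_powMeasure (β φ : ℝ) {N : ℕ} (hN : N ≠ 0) {F : ℂ → ℝ≥0∞}
    (hF : Measurable F) :
    ∫⁻ w, F w ∂powMeasure β φ N =
      ∫⁻ r in Ioo 0 1, radialWeight β r * ∫⁻ θ in Ioc (-π) π, F (circleMap 0 (r ^ N) θ) := by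
  have hpow (r θ : ℝ) : Complex.exp (φ * Complex.I) * circleMap 0 r θ ^ N =
      circleMap 0 (r ^ N) (φ + N * θ) := by
    simp only [circleMap, zero_add, mul_pow, ← Complex.exp_nat_mul]
    push_cast
    rw [add_mul, Complex.exp_add]
    ring_nf
  rw [powMeasure, lintegral_map hF (by fun_prop),
    lintegral_discMeasure_eq_polar β (by fun_prop)]
  simp only [hpow, lintegral_circleMap_comp_affine hF _ φ hN]

theorem powMeasure_apply (β φ : ℝ) {N : ℕ} (hN : N ≠ 0) {S : Set ℂ} (hS : MeasurableSet S) :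
    powMeasure β φ N S =
      ∫⁻ r in Ioo 0 1, radialWeight β r *
        volume {θ | circleMap 0 (r ^ N) θ ∈ S ∧ θ ∈ Ioc (-π) π} := by
  have hmeas (ρ : ℝ) : MeasurableSet {θ | circleMap 0 ρ θ ∈ S} :=
    (continuous_circleMap 0 ρ).measurable hS
  rw [← lintegral_indicator_one hS, lintegral_powMeasure β φ hN (measurable_one.indicator hS)]
  refine lintegral_congr fun r => ?_
  congr 1
  exact (lintegral_indicator_one (hmeas _)).trans (Measure.restrict_apply (hmeas _))

/-! ### Boundary boxes in the disc -/

/-- The part of the unit disc in the rectangle `1 - δ < Re w`, `|Im w - s| < κ`: a neighbourhood of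
the boundary point `1` when `s = 0`. -/
def boundaryBox (δ κ s : ℝ) : Set ℂ := {w | ‖w‖ < 1 ∧ 1 - δ < w.re ∧ |w.im - s| < κ}

@[measurability]
theorem measurableSet_boundaryBox (δ κ s : ℝ) : MeasurableSet (boundaryBox δ κ s) :=
  (measurableSet_lt measurable_norm measurable_const).inter <|
    (measurableSet_lt measurable_const Complex.measurable_re).inter <|
      measurableSet_lt (Complex.measurable_im.sub_const s).norm measurable_const

theorem circleMap_mem_boundaryBox {δ κ s ρ θ : ℝ} :
    circleMap 0 ρ θ ∈ boundaryBox δ κ s ↔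
      |ρ| < 1 ∧ 1 - δ < ρ * Real.cos θ ∧ |ρ * Real.sin θ - s| < κ := by
  rw [boundaryBox, mem_ofPred_eq, norm_circleMap_zero, circleMap_zero_re, circleMap_zero_im]

theorem abs_lt_pi_div_three_of_half_lt_cos {θ : ℝ} (hθ : |θ| ≤ π) (hcos : 1 / 2 < Real.cos θ) :
    |θ| < π / 3 := by
  by_contra! hle
  have := Real.cos_le_cos_of_nonneg_of_le_pi (by positivity) hθ hle
  rw [Real.cos_abs, Real.cos_pi_div_three] at this
  linarith

theorem sub_le_two_mul_sin_sub_sin {x y : ℝ} (hx : |x| < π / 3) (hy : |y| < π / 3) (hxy : x ≤ y) :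
    y - x ≤ 2 * (Real.sin y - Real.sin x) := by
  have hderiv : ∀ t ∈ interior (Icc x y), 1 / 2 ≤ deriv Real.sin t := fun t ht => by
    rw [interior_Icc] at ht
    have ht3 : |t| ≤ π / 3 :=
      abs_le.2 ⟨by linarith [ht.1, (abs_lt.1 hx).1], by linarith [ht.2, (abs_lt.1 hy).2]⟩
    rw [Real.deriv_sin, ← Real.cos_pi_div_three, ← Real.cos_abs t]
    exact Real.cos_le_cos_of_nonneg_of_le_pi (abs_nonneg t) (by linarith [Real.pi_pos]) ht3
  have := (convex_Icc x y).mul_sub_le_image_sub_of_le_deriv Real.continuous_sin.continuousOn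
    Real.differentiable_sin.differentiableOn hderiv x (left_mem_Icc.2 hxy) y
    (right_mem_Icc.2 hxy) hxy
  linarith

theorem abs_sub_le_two_mul_abs_sin_sub_sin {x y : ℝ} (hx : |x| < π / 3) (hy : |y| < π / 3) :
    |x - y| ≤ 2 * |Real.sin x - Real.sin y| := by
  rcases le_total x y with hxy | hxy
  · rw [abs_sub_comm x, abs_sub_comm (Real.sin x), abs_of_nonneg (sub_nonneg.2 hxy)]
    exact (sub_le_two_mul_sin_sub_sin hx hy hxy).trans (by gcongr; exact le_abs_self _)
  · rw [abs_of_nonneg (sub_nonneg.2 hxy)]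
    exact (sub_le_two_mul_sin_sub_sin hy hx hxy).trans (by gcongr; exact le_abs_self _)

theorem volume_boundaryBox_slice_le {δ κ s ρ : ℝ} (hδ : δ ≤ 1 / 2) (hρ : 0 ≤ ρ) :
    volume {θ | circleMap 0 ρ θ ∈ boundaryBox δ κ s ∧ θ ∈ Ioc (-π) π} ≤ .ofReal (8 * κ) := by
  refine (Real.volume_le_diam _).trans (ediam_le fun θ hθ θ' hθ' => ?_)
  have hcos {t : ℝ} (ht : circleMap 0 ρ t ∈ boundaryBox δ κ s ∧ t ∈ Ioc (-π) π) :
      1 / 2 < ρ ∧ |t| < π / 3 ∧ |ρ * Real.sin t - s| < κ := by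
    obtain ⟨hρ1, hre, him⟩ := circleMap_mem_boundaryBox.1 ht.1
    rw [abs_of_nonneg hρ] at hρ1
    have hcos : 1 / 2 < Real.cos t := by nlinarith [Real.cos_le_one t]
    exact ⟨by nlinarith [Real.cos_le_one t],
      abs_lt_pi_div_three_of_half_lt_cos (abs_le.2 ⟨ht.2.1.le, ht.2.2⟩) hcos, him⟩
  obtain ⟨hhalf, hθ3, hθs⟩ := hcos hθ
  obtain ⟨-, hθ'3, hθ's⟩ := hcos hθ'
  have hsin : ρ * |Real.sin θ - Real.sin θ'| < 2 * κ := by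
    calc ρ * |Real.sin θ - Real.sin θ'| = |ρ * Real.sin θ - ρ * Real.sin θ'| := by
          rw [← mul_sub, abs_mul, abs_of_nonneg hρ]
      _ ≤ |ρ * Real.sin θ - s| + |s - ρ * Real.sin θ'| := abs_sub_le _ _ _
      _ < 2 * κ := by rw [abs_sub_comm s]; linarith
  rw [edist_dist, Real.dist_eq]
  refine ofReal_le_ofReal ((abs_sub_le_two_mul_abs_sin_sub_sin hθ3 hθ'3).trans ?_)
  nlinarith [abs_nonneg (Real.sin θ - Real.sin θ')]

theorem powMeasure_boundaryBox_le {β : ℝ} (hβ : -1 < β) (φ : ℝ) {N : ℕ} (hN : N ≠ 0)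
    {δ : ℝ} (hδ : 0 ≤ δ) (hδ2 : δ ≤ 1 / 2) {κ : ℝ} (hκ : 0 ≤ κ) (s : ℝ) :
    powMeasure β φ N (boundaryBox δ κ s) ≤ .ofReal ((2 * δ) ^ (β + 1) * (2 * κ)) := by
  have hslice (r : ℝ) (hr : r ∈ Ioo 0 1) :
      radialWeight β r * volume {θ | circleMap 0 (r ^ N) θ ∈ boundaryBox δ κ s ∧ θ ∈ Ioc (-π) π} ≤
        (Ioo (1 - δ) 1).indicator (fun r => radialWeight β r * .ofReal (8 * κ)) r := by
    by_cases hrδ : 1 - δ < r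
    · rw [indicator_of_mem (mem_Ioo.2 ⟨hrδ, hr.2⟩)]
      gcongr
      exact volume_boundaryBox_slice_le hδ2 (pow_nonneg hr.1.le N)
    · have hempty : {θ | circleMap 0 (r ^ N) θ ∈ boundaryBox δ κ s ∧ θ ∈ Ioc (-π) π} = ∅ := by
        refine eq_empty_of_forall_notMem fun θ hθ => hrδ ?_
        have hre := (circleMap_mem_boundaryBox.1 hθ.1).2.1
        have hrN : 0 ≤ r ^ N := pow_nonneg hr.1.le N
        nlinarith [Real.cos_le_one θ, pow_le_of_le_one hr.1.le hr.2.le hN]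
      rw [hempty, measure_empty, mul_zero]
      exact zero_le
  calc powMeasure β φ N (boundaryBox δ κ s)
      ≤ ∫⁻ r, (Ioo (1 - δ) 1).indicator (fun r => radialWeight β r * .ofReal (8 * κ)) r := by
        rw [powMeasure_apply β φ hN (measurableSet_boundaryBox δ κ s)]
        exact (setLIntegral_mono' measurableSet_Ioo hslice).trans (setLIntegral_le_lintegral _ _)
    _ = .ofReal ((2 * δ - δ ^ 2) ^ (β + 1) / (2 * π) * (8 * κ)) := by
        rw [lintegral_indicator measurableSet_Ioo,
          lintegral_mul_const _ (measurable_radialWeight β),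
          lintegral_radialWeight hβ hδ (by linarith), ← ofReal_mul]
        have : 0 ≤ 2 * δ - δ ^ 2 := by nlinarith
        positivity
    _ ≤ .ofReal ((2 * δ) ^ (β + 1) * (2 * κ)) := by
        have hbase : (2 * δ - δ ^ 2) ^ (β + 1) ≤ (2 * δ) ^ (β + 1) :=
          Real.rpow_le_rpow (by nlinarith) (by nlinarith [sq_nonneg δ]) (by linarith)
        have hpi : 4 ≤ 2 * π := by linarith [Real.pi_gt_three]
        refine ofReal_le_ofReal ?_
        calc _ ≤ (2 * δ) ^ (β + 1) / 4 * (8 * κ) := by gcongr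
          _ = (2 * δ) ^ (β + 1) * (2 * κ) := by ring

theorem abs_arcsin_le {x : ℝ} (hx : |x| ≤ 1) : |Real.arcsin x| ≤ 2 * |x| := by
  have hsin := Real.mul_abs_le_abs_sin (x := Real.arcsin x)
    (abs_le.2 ⟨Real.neg_pi_div_two_le_arcsin x, Real.arcsin_le_pi_div_two x⟩)
  rw [Real.sin_arcsin (abs_le.1 hx).1 (abs_le.1 hx).2, div_mul_eq_mul_div,
    div_le_iff₀ Real.pi_pos] at hsin
  nlinarith [Real.pi_le_four, abs_nonneg x]

theorem Ioo_arcsin_subset_boundaryBox_slice {δ κ s ρ : ℝ} (hδ1 : δ ≤ 1) (hκ : 0 ≤ κ)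
    (hs : (4 * |s| + κ) ^ 2 ≤ δ) (hρ : 1 - δ / 2 < ρ) (hρ1 : ρ < 1) :
    Ioo (Real.arcsin (s / ρ) - κ) (Real.arcsin (s / ρ) + κ) ⊆
      {θ | circleMap 0 ρ θ ∈ boundaryBox δ κ s ∧ θ ∈ Ioc (-π) π} := by
  intro θ hθ
  have hρ0 : 1 / 2 < ρ := by linarith
  have hs1 : 4 * |s| + κ ≤ 1 := by nlinarith [abs_nonneg s]
  have hsρ : |s / ρ| ≤ 2 * |s| := by
    rw [abs_div, abs_of_pos (by linarith : 0 < ρ), div_le_iff₀ (by linarith)]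
    nlinarith [abs_nonneg s]
  have hsρ1 : |s / ρ| ≤ 1 := by linarith [abs_nonneg s]
  have hdist : |θ - Real.arcsin (s / ρ)| < κ := abs_lt.2 ⟨by linarith [hθ.1], by linarith [hθ.2]⟩
  have hθs : |θ| < 4 * |s| + κ := by
    have := abs_sub_abs_le_abs_sub θ (Real.arcsin (s / ρ))
    linarith [abs_arcsin_le hsρ1]
  have hcos : 1 - δ / 2 ≤ Real.cos θ := by
    have : θ ^ 2 ≤ δ := by
      rw [← sq_abs]
      exact (pow_le_pow_left₀ (abs_nonneg θ) hθs.le 2).trans hs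
    linarith [Real.one_sub_sq_div_two_le_cos (x := θ)]
  have hsin : |ρ * Real.sin θ - s| < κ := by
    have hs_eq : s = ρ * Real.sin (Real.arcsin (s / ρ)) := by
      rw [Real.sin_arcsin (abs_le.1 hsρ1).1 (abs_le.1 hsρ1).2]
      field_simp
    calc |ρ * Real.sin θ - s| = ρ * |Real.sin θ - Real.sin (Real.arcsin (s / ρ))| := by
          conv_lhs => rw [hs_eq, ← mul_sub, abs_mul, abs_of_pos (by linarith : 0 < ρ)]
      _ ≤ |Real.sin θ - Real.sin (Real.arcsin (s / ρ))| :=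
          mul_le_of_le_one_left (abs_nonneg _) hρ1.le
      _ ≤ |θ - Real.arcsin (s / ρ)| := by
          simpa [Real.dist_eq] using Real.lipschitzWith_sin.dist_le_mul θ (Real.arcsin (s / ρ))
      _ < κ := hdist
  have hπ := Real.pi_gt_three
  have := abs_lt.1 hθs
  exact ⟨circleMap_mem_boundaryBox.2
    ⟨abs_lt.2 ⟨by linarith, hρ1⟩, by nlinarith, hsin⟩, by linarith, by linarith⟩

theorem le_powMeasure_boundaryBox {β : ℝ} (hβ : -1 < β) (φ : ℝ) {N : ℕ} (hN : N ≠ 0)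
    {δ κ s : ℝ} (hδ : 0 < δ) (hδ1 : δ ≤ 1) (hκ : 0 ≤ κ) (hs : (4 * |s| + κ) ^ 2 ≤ δ) :
    .ofReal ((δ / (2 * N)) ^ (β + 1) / π * κ) ≤ powMeasure β φ N (boundaryBox δ κ s) := by
  have hN1 : (1 : ℝ) ≤ N := by exact_mod_cast Nat.one_le_iff_ne_zero.2 hN
  set η := δ / (2 * N) with hη
  have hη0 : 0 < η := by positivity
  have hηN : N * η = δ / 2 := by rw [hη]; field_simp
  have hη1 : η ≤ 1 := by nlinarith
  have hslice (r : ℝ) (hr : r ∈ Ioo (1 - η) 1) : .ofReal (2 * κ) ≤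
      volume {θ | circleMap 0 (r ^ N) θ ∈ boundaryBox δ κ s ∧ θ ∈ Ioc (-π) π} := by
    have hr0 : 0 ≤ r := by linarith [hr.1]
    have hbern := one_add_mul_le_pow (a := r - 1) (by linarith) N
    rw [add_sub_cancel] at hbern
    have hρ : 1 - δ / 2 < r ^ N := by nlinarith [hr.1]
    refine le_trans (le_of_eq ?_) (measure_mono
      (Ioo_arcsin_subset_boundaryBox_slice hδ1 hκ hs hρ (pow_lt_one₀ hr0 hr.2 hN)))
    rw [Real.volume_Ioo]
    ring_nf
  calc .ofReal (η ^ (β + 1) / π * κ)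
      ≤ .ofReal ((2 * η - η ^ 2) ^ (β + 1) / (2 * π) * (2 * κ)) := by
        have : η ^ (β + 1) ≤ (2 * η - η ^ 2) ^ (β + 1) :=
          Real.rpow_le_rpow hη0.le (by nlinarith) (by linarith)
        refine ofReal_le_ofReal ?_
        calc η ^ (β + 1) / π * κ ≤ (2 * η - η ^ 2) ^ (β + 1) / π * κ := by gcongr
          _ = (2 * η - η ^ 2) ^ (β + 1) / (2 * π) * (2 * κ) := by field_simp
    _ = ∫⁻ r in Ioo (1 - η) 1, radialWeight β r * .ofReal (2 * κ) := by
        rw [lintegral_mul_const _ (measurable_radialWeight β),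
          lintegral_radialWeight hβ hη0.le hη1, ← ofReal_mul]
        have : 0 ≤ 2 * η - η ^ 2 := by nlinarith
        positivity
    _ ≤ powMeasure β φ N (boundaryBox δ κ s) := by
        rw [powMeasure_apply β φ hN (measurableSet_boundaryBox δ κ s)]
        refine (setLIntegral_mono' measurableSet_Ioo fun r hr => ?_).trans
          (lintegral_mono_set (Ioo_subset_Ioo_left (by linarith)))
        gcongr
        exact hslice r hr

/-! ### Boundary slabs in the polydisc -/

/-- The neighbourhood of the boundary point `(1, …, 1)` of the polydisc on which `∑ j, a j * w j` is
within order `δ` of `1`, for weights `a j > 0` of sum `1`. -/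
def boundarySlab {n : ℕ} (a : Fin n → ℝ) (δ : ℝ) : Set (Fin n → ℂ) :=
  {w | (∀ j, ‖w j‖ < 1 ∧ 1 - δ < (w j).re) ∧ |∑ j, a j * (w j).im| < δ}

/-- The exponent `M` for which boundary slabs of width `δ` have volume of order `δ ^ M`. -/
def slabExponent (n : ℕ) (β : ℝ) : ℝ := n * (β + 1) + (n + 1) / 2

theorem measurableSet_boundarySlab {n : ℕ} (a : Fin n → ℝ) (δ : ℝ) :
    MeasurableSet (boundarySlab a δ) := by
  have hcoord (j : Fin n) : MeasurableSet {w : Fin n → ℂ | ‖w j‖ < 1 ∧ 1 - δ < (w j).re} :=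
    (measurableSet_lt (measurable_pi_apply j).norm measurable_const).inter
      (measurableSet_lt measurable_const (Complex.measurable_re.comp (measurable_pi_apply j)))
  have hsum : Measurable fun w : Fin n → ℂ => ∑ j, a j * (w j).im := by fun_prop
  have hset : boundarySlab a δ =
      (⋂ j, {w : Fin n → ℂ | ‖w j‖ < 1 ∧ 1 - δ < (w j).re}) ∩ {w | |∑ j, a j * (w j).im| < δ} := by
    ext w
    simp [boundarySlab]
  rw [hset]
  exact (MeasurableSet.iInter hcoord).inter (measurableSet_lt hsum.norm measurable_const)

theorem slabExponent_nonneg (n : ℕ) {β : ℝ} (hβ : -1 < β) : 0 ≤ slabExponent n β := by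
  have : 0 < β + 1 := by linarith
  unfold slabExponent
  positivity

theorem rpow_slabExponent_succ (k : ℕ) (β : ℝ) {h : ℝ} (hh : 0 < h) :
    h ^ slabExponent (k + 1) β = h ^ (β + 1) * h * (h ^ (β + 1) * √h) ^ k := by
  rw [Real.sqrt_eq_rpow, ← Real.rpow_add hh, ← Real.rpow_add_one hh.ne',
    ← Real.rpow_mul_natCast hh.le, ← Real.rpow_add hh, slabExponent]
  push_cast
  ring_nf

theorem mem_boundaryBox_sqrt {δ : ℝ} (hδ : δ ≤ 1) {w : ℂ} (hw : ‖w‖ < 1) (hre : 1 - δ < w.re) :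
    w ∈ boundaryBox δ √(2 * δ) 0 := by
  refine ⟨hw, hre, Real.lt_sqrt_of_sq_lt ?_⟩
  have hsq : w.re ^ 2 + w.im ^ 2 < 1 := by
    rw [← Complex.sq_norm_sub_sq_re w]
    nlinarith [norm_nonneg w]
  rw [sub_zero, sq_abs]
  nlinarith [sq_nonneg δ]

section Slab

variable {k : ℕ} {a : Fin (k + 1) → ℝ} {β : ℝ} {φ : Fin (k + 1) → ℝ} {N : Fin (k + 1) → ℕ}

theorem sum_mul_im_cons (x : ℂ) (y : Fin k → ℂ) (ha : a 0 ≠ 0) :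
    ∑ j, a j * ((Fin.cons x y : Fin (k + 1) → ℂ) j).im =
      a 0 * (x.im - -(∑ j : Fin k, a j.succ * (y j).im) / a 0) := by
  simp only [Fin.sum_univ_succ, Fin.cons_zero, Fin.cons_succ]
  field_simp
  ring

theorem cons_mem_boundarySlab (ha : 0 < a 0) (δ : ℝ) (x : ℂ) (y : Fin k → ℂ) :
    (Fin.cons x y : Fin (k + 1) → ℂ) ∈ boundarySlab a δ ↔
      x ∈ boundaryBox δ (δ / a 0) (-(∑ j : Fin k, a j.succ * (y j).im) / a 0) ∧
        ∀ j, ‖y j‖ < 1 ∧ 1 - δ < (y j).re := by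
  rw [boundarySlab, boundaryBox, mem_ofPred_eq, mem_ofPred_eq, sum_mul_im_cons x y ha.ne', abs_mul,
    abs_of_pos ha, Fin.forall_fin_succ, lt_div_iff₀' ha]
  simp only [Fin.cons_zero, Fin.cons_succ]
  tauto

theorem pi_powMeasure_boundarySlab_le_of_le_half (hβ : -1 < β) (hN : ∀ j, N j ≠ 0) (ha : 0 < a 0)
    {δ : ℝ} (hδ : 0 < δ) (hδ2 : δ ≤ 1 / 2) :
    Measure.pi (fun j => powMeasure β (φ j) (N j)) (boundarySlab a δ) ≤
      .ofReal (2 ^ k / a 0 * (2 * δ) ^ slabExponent (k + 1) β) := by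
  have hprob (j : Fin (k + 1)) := isProbabilityMeasure_powMeasure hβ (φ j) (N j)
  have hslice (y : Fin k → ℂ) :
      powMeasure β (φ 0) (N 0) {x | (Fin.cons x y : Fin (k + 1) → ℂ) ∈ boundarySlab a δ} ≤
        .ofReal ((2 * δ) ^ (β + 1) * (2 * (δ / a 0))) :=
    (measure_mono fun x hx => ((cons_mem_boundarySlab ha δ x y).1 hx).1).trans
      (powMeasure_boundaryBox_le hβ _ (hN 0) hδ.le hδ2 (by positivity) _)
  have htail (x : ℂ) (y : Fin k → ℂ) (hxy : (Fin.cons x y : Fin (k + 1) → ℂ) ∈ boundarySlab a δ) :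
      y ∈ univ.pi fun _ => boundaryBox δ √(2 * δ) 0 := fun j _ =>
    have hj := ((cons_mem_boundarySlab ha δ x y).1 hxy).2 j
    mem_boundaryBox_sqrt (by linarith) hj.1 hj.2
  calc Measure.pi (fun j => powMeasure β (φ j) (N j)) (boundarySlab a δ)
      ≤ .ofReal ((2 * δ) ^ (β + 1) * (2 * (δ / a 0))) *
          ∏ j : Fin k, powMeasure β (φ j.succ) (N j.succ) (boundaryBox δ √(2 * δ) 0) :=
        measure_pi_fin_succ_le _ (measurableSet_boundarySlab a δ)
          (fun _ => measurableSet_boundaryBox _ _ _) htail hslice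
    _ ≤ .ofReal ((2 * δ) ^ (β + 1) * (2 * (δ / a 0))) *
          ∏ _j : Fin k, .ofReal ((2 * δ) ^ (β + 1) * (2 * √(2 * δ))) := by
        gcongr
        exact powMeasure_boundaryBox_le hβ _ (hN _) hδ.le hδ2 (by positivity) _
    _ = .ofReal (2 ^ k / a 0 * (2 * δ) ^ slabExponent (k + 1) β) := by
        rw [Finset.prod_const, Finset.card_fin, ← ofReal_pow (by positivity),
          ← ofReal_mul (by positivity), rpow_slabExponent_succ k β (by positivity)]
        congr 1
        simp only [mul_pow]
        ring

theorem pi_powMeasure_boundarySlab_le (hβ : -1 < β) (hN : ∀ j, N j ≠ 0) (ha : 0 < a 0)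
    (ha1 : a 0 ≤ 1) {δ : ℝ} (hδ : 0 < δ) :
    Measure.pi (fun j => powMeasure β (φ j) (N j)) (boundarySlab a δ) ≤
      .ofReal (2 ^ k / a 0 * (2 * δ) ^ slabExponent (k + 1) β) := by
  rcases le_total δ (1 / 2) with hδ2 | hδ2
  · exact pi_powMeasure_boundarySlab_le_of_le_half hβ hN ha hδ hδ2
  · have hprob (j : Fin (k + 1)) := isProbabilityMeasure_powMeasure hβ (φ j) (N j)
    refine prob_le_one.trans (one_le_ofReal.2 (one_le_mul_of_one_le_of_one_le ?_ ?_))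
    · exact (one_le_div ha).2 (ha1.trans (one_le_pow₀ one_le_two))
    · exact Real.one_le_rpow (by linarith) (slabExponent_nonneg _ hβ)

theorem abs_sum_mul_im_div_le (ha : ∀ j, 0 ≤ a j) (hsum : ∑ j, a j = 1) (ha0 : 0 < a 0)
    {y : Fin k → ℂ} {τ : ℝ} (hτ : 0 ≤ τ) (hy : ∀ j, |(y j).im| ≤ a 0 * τ) :
    |-(∑ j : Fin k, a j.succ * (y j).im) / a 0| ≤ τ := by
  have hrest : ∑ j : Fin k, a j.succ ≤ 1 := by
    rw [Fin.sum_univ_succ] at hsum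
    linarith
  rw [abs_div, abs_neg, abs_of_pos ha0, div_le_iff₀' ha0]
  calc |∑ j : Fin k, a j.succ * (y j).im| ≤ ∑ j : Fin k, a j.succ * (a 0 * τ) := by
        refine (Finset.abs_sum_le_sum_abs _ _).trans (Finset.sum_le_sum fun j _ => ?_)
        rw [abs_mul, abs_of_nonneg (ha _)]
        exact mul_le_mul_of_nonneg_left (hy j) (ha _)
    _ = (∑ j : Fin k, a j.succ) * (a 0 * τ) := (Finset.sum_mul ..).symm
    _ ≤ a 0 * τ := mul_le_of_le_one_left (by positivity) hrest

theorem le_pi_powMeasure_boundarySlab_of_boxes (hβ : -1 < β) (hN : ∀ j, N j ≠ 0)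
    (ha : ∀ j, 0 ≤ a j) (hsum : ∑ j, a j = 1) (ha0 : 0 < a 0) {δ : ℝ} (hδ : 0 < δ) (hδ1 : δ ≤ 1) :
    .ofReal ((δ / (2 * N 0)) ^ (β + 1) / π * (δ / 2)) *
        ∏ j : Fin k, .ofReal ((δ / (2 * N j.succ)) ^ (β + 1) / π * (a 0 * (√δ / 8))) ≤
      Measure.pi (fun j => powMeasure β (φ j) (N j)) (boundarySlab a δ) := by
  have hprob (j : Fin (k + 1)) := isProbabilityMeasure_powMeasure hβ (φ j) (N j)
  have ha1 : a 0 ≤ 1 := hsum ▸ Finset.single_le_sum (fun j _ => ha j) (Finset.mem_univ 0)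
  have hδsq : √δ ^ 2 = δ := Real.sq_sqrt hδ.le
  have hδle : δ ≤ √δ := Real.le_sqrt_of_sq_le (by nlinarith)
  have hslice : ∀ y ∈ univ.pi fun _ : Fin k => boundaryBox δ (a 0 * (√δ / 8)) 0,
      .ofReal ((δ / (2 * N 0)) ^ (β + 1) / π * (δ / 2)) ≤
        powMeasure β (φ 0) (N 0) {x | (Fin.cons x y : Fin (k + 1) → ℂ) ∈ boundarySlab a δ} := by
    intro y hy
    have hs := abs_sum_mul_im_div_le (τ := √δ / 8) (y := y) ha hsum ha0 (by positivity) fun j => by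
      simpa using (hy j (mem_univ j)).2.2.le
    refine (le_powMeasure_boundaryBox hβ (φ 0) (hN 0) hδ hδ1 (by positivity) ?_).trans
      (measure_mono fun x hx => (cons_mem_boundarySlab ha0 δ x y).2
        ⟨⟨hx.1, hx.2.1, hx.2.2.trans_le ?_⟩, fun j => ⟨(hy j trivial).1, (hy j trivial).2.1⟩⟩)
    · refine (pow_le_pow_left₀ (by positivity) ?_ 2).trans_eq hδsq
      linarith
    · rw [le_div_iff₀ ha0]
      nlinarith
  refine le_trans ?_ (le_measure_pi_fin_succ _ (measurableSet_boundarySlab a δ)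
    (fun _ => measurableSet_boundaryBox _ _ _) hslice)
  gcongr with j
  refine le_powMeasure_boundaryBox hβ _ (hN _) hδ hδ1 (by positivity) ?_
  rw [abs_zero, mul_zero, zero_add]
  refine (pow_le_pow_left₀ (by positivity) ?_ 2).trans_eq hδsq
  nlinarith [Real.sqrt_nonneg δ]

theorem exists_le_pi_powMeasure_boundarySlab (hβ : -1 < β) (hN : ∀ j, N j ≠ 0)
    (ha : ∀ j, 0 ≤ a j) (hsum : ∑ j, a j = 1) (ha0 : 0 < a 0) :
    ∃ c > 0, ∀ δ : ℝ, 0 < δ → δ ≤ 1 → .ofReal (c * δ ^ slabExponent (k + 1) β) ≤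
      Measure.pi (fun j => powMeasure β (φ j) (N j)) (boundarySlab a δ) := by
  have hN0 (j) : (0 : ℝ) < N j := by exact_mod_cast Nat.pos_of_ne_zero (hN j)
  have h0 := hN0 0
  refine ⟨((2 * N 0 : ℝ)⁻¹ ^ (β + 1) / π / 2) *
    ∏ j : Fin k, ((2 * N j.succ : ℝ)⁻¹ ^ (β + 1) / π * (a 0 / 8)),
    mul_pos (by positivity) (Finset.prod_pos fun j _ => ?_), fun δ hδ hδ1 => ?_⟩
  · have := hN0 j.succ
    positivity
  refine le_trans (le_of_eq ?_) (le_pi_powMeasure_boundarySlab_of_boxes hβ hN ha hsum ha0 hδ hδ1)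
  have hdiv (j) : (δ / (2 * N j)) ^ (β + 1) = (2 * N j : ℝ)⁻¹ ^ (β + 1) * δ ^ (β + 1) := by
    rw [div_eq_inv_mul, Real.mul_rpow (by positivity) hδ.le]
  rw [← ofReal_prod_of_nonneg fun j _ => by positivity, ← ofReal_mul (by positivity),
    rpow_slabExponent_succ k β hδ]
  congr 1
  rw [← Fin.prod_const k (δ ^ (β + 1) * √δ), mul_mul_mul_comm, ← Finset.prod_mul_distrib, hdiv]
  congr 1
  · ring
  · refine Finset.prod_congr rfl fun j _ => ?_
    rw [hdiv]
    ring

end Slab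

/-! ### Sublevel sets of weighted power sums -/

/-- The holomorphic function `g(z) = ∑ j, α j * z j ^ N j`. -/
def weightedPowerSum {n : ℕ} (α : Fin n → ℂ) (N : Fin n → ℕ) (z : Fin n → ℂ) : ℂ :=
  ∑ j, α j * z j ^ N j

@[fun_prop]
theorem measurable_weightedPowerSum {n : ℕ} (α : Fin n → ℂ) (N : Fin n → ℕ) :
    Measurable (weightedPowerSum α N) := by
  unfold weightedPowerSum
  fun_prop

theorem weightedPowerSum_eq_exp_mul {n : ℕ} (α : Fin n → ℂ) (N : Fin n → ℕ) (z : Fin n → ℂ)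
    (ψ : ℝ) :
    weightedPowerSum α N z = Complex.exp (ψ * Complex.I) *
      ∑ j, (‖α j‖ : ℂ) * (Complex.exp (((α j).arg - ψ : ℝ) * Complex.I) * z j ^ N j) := by
  rw [weightedPowerSum, Finset.mul_sum]
  refine Finset.sum_congr rfl fun j _ => ?_
  conv_lhs => rw [← Complex.norm_mul_exp_arg_mul_I (α j)]
  have hexp : Complex.exp ((α j).arg * Complex.I) =
      Complex.exp (ψ * Complex.I) * Complex.exp (((α j).arg - ψ : ℝ) * Complex.I) := by
    rw [← Complex.exp_add]
    push_cast
    ring_nf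
  rw [hexp]
  ring

theorem norm_weightedPowerSum_sub {n : ℕ} (α : Fin n → ℂ) (N : Fin n → ℕ) (z : Fin n → ℂ) (ζ : ℂ) :
    ‖weightedPowerSum α N z - ζ‖ =
      ‖∑ j, (‖α j‖ : ℂ) * (Complex.exp (((α j).arg - ζ.arg : ℝ) * Complex.I) * z j ^ N j) -
        ‖ζ‖‖ := by
  set S := ∑ j, (‖α j‖ : ℂ) * (Complex.exp (((α j).arg - ζ.arg : ℝ) * Complex.I) * z j ^ N j)
  calc ‖weightedPowerSum α N z - ζ‖
      = ‖Complex.exp (ζ.arg * Complex.I) * S - ‖ζ‖ * Complex.exp (ζ.arg * Complex.I)‖ := by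
        rw [Complex.norm_mul_exp_arg_mul_I, ← weightedPowerSum_eq_exp_mul]
    _ = ‖S - ‖ζ‖‖ := by
        rw [mul_comm (‖ζ‖ : ℂ), ← mul_sub, norm_mul, Complex.norm_exp_ofReal_mul_I, one_mul]

theorem norm_weightedPowerSum_lt_one {n : ℕ} {α : Fin n → ℂ} (hα : ∑ j, ‖α j‖ = 1)
    {N : Fin n → ℕ} (hN : ∀ j, N j ≠ 0) {z : Fin n → ℂ} (hz : z ∈ polydisc n) :
    ‖weightedPowerSum α N z‖ < 1 := by
  have hle (j : Fin n) : ‖α j * z j ^ N j‖ ≤ ‖α j‖ * ‖z j‖ := by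
    rw [norm_mul, norm_pow]
    gcongr
    exact pow_le_of_le_one (norm_nonneg _) (hz j).le (hN j)
  obtain ⟨j, -, hj⟩ : ∃ j ∈ Finset.univ, 0 < ‖α j‖ :=
    Finset.exists_lt_of_sum_lt (by simp [hα])
  calc ‖weightedPowerSum α N z‖ ≤ ∑ j, ‖α j‖ * ‖z j‖ :=
        (norm_sum_le _ _).trans (Finset.sum_le_sum fun j _ => hle j)
    _ < ∑ j, ‖α j‖ :=
        Finset.sum_lt_sum (fun i _ => mul_le_of_le_one_right (norm_nonneg _) (hz i).le)
          ⟨j, Finset.mem_univ j, mul_lt_of_lt_one_right hj (hz j)⟩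
    _ = 1 := hα

theorem map_Vbeta_rotate_pow (n : ℕ) {β : ℝ} (hβ : -1 < β) (φ : Fin n → ℝ) (N : Fin n → ℕ) :
    (Vbeta n β).map (fun z j => Complex.exp (φ j * Complex.I) * z j ^ N j) =
      Measure.pi fun j => powMeasure β (φ j) (N j) := by
  have hprob (j : Fin n) := isProbabilityMeasure_powMeasure hβ (φ j) (N j)
  simp only [powMeasure] at hprob ⊢
  rw [Vbeta_eq_pi n hβ]
  exact Measure.pi_map_pi (f := fun j z => Complex.exp (φ j * Complex.I) * z ^ N j)
    fun j => by fun_prop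

theorem mem_boundarySlab_of_norm_sum_sub_lt {n : ℕ} {a : Fin n → ℝ} {m : ℝ} (hm : 0 < m)
    (hm1 : m ≤ 1) (hma : ∀ j, m ≤ a j) (hsum : ∑ j, a j = 1) {w : Fin n → ℂ}
    (hw : w ∈ polydisc n) {h : ℝ} (hwh : ‖∑ j, (a j : ℂ) * w j - (1 - h : ℝ)‖ < h) :
    w ∈ boundarySlab a (2 * h / m) := by
  have hh : 0 < h := (norm_nonneg _).trans_lt hwh
  have hre : ∑ j, a j * (1 - (w j).re) < 2 * h := by
    have := ((Complex.abs_re_le_norm _).trans_lt hwh)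
    simp only [Complex.sub_re, Complex.re_sum, Complex.re_ofReal_mul, Complex.ofReal_re,
      abs_lt] at this
    simp only [mul_sub, mul_one, Finset.sum_sub_distrib, hsum]
    linarith
  have him : |∑ j, a j * (w j).im| < h := by
    have := ((Complex.abs_im_le_norm _).trans_lt hwh)
    simpa only [Complex.sub_im, Complex.im_sum, Complex.im_ofReal_mul, Complex.ofReal_im,
      sub_zero] using this
  have hpos (j : Fin n) : 0 ≤ 1 - (w j).re :=
    sub_nonneg.2 ((Complex.re_le_norm _).trans (hw j).le)
  refine ⟨fun j => ⟨hw j, ?_⟩, him.trans_le ((le_div_iff₀ hm).2 (by nlinarith))⟩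
  have hterm : a j * (1 - (w j).re) ≤ ∑ i, a i * (1 - (w i).re) :=
    Finset.single_le_sum (f := fun i => a i * (1 - (w i).re))
      (fun i _ => mul_nonneg (hm.le.trans (hma i)) (hpos i)) (Finset.mem_univ j)
  have : 1 - (w j).re < 2 * h / m := by
    rw [lt_div_iff₀' hm]
    exact (mul_le_mul_of_nonneg_right (hma j) (hpos j)).trans_lt (hterm.trans_lt hre)
  linarith

theorem norm_one_sub_sum_le_of_mem_boundarySlab {n : ℕ} {a : Fin n → ℝ} (ha : ∀ j, 0 ≤ a j)
    (hsum : ∑ j, a j = 1) {w : Fin n → ℂ} {δ : ℝ} (hw : w ∈ boundarySlab a δ) :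
    ‖1 - ∑ j, (a j : ℂ) * w j‖ ≤ 2 * δ := by
  have hre : 1 - ∑ j, a j * (w j).re = ∑ j, a j * (1 - (w j).re) := by
    simp only [mul_sub, mul_one, Finset.sum_sub_distrib, hsum]
  have hnonneg : 0 ≤ ∑ j, a j * (1 - (w j).re) := Finset.sum_nonneg fun j _ =>
    mul_nonneg (ha j) (sub_nonneg.2 ((Complex.re_le_norm _).trans (hw.1 j).1.le))
  have hle : ∑ j, a j * (1 - (w j).re) ≤ δ := by
    calc ∑ j, a j * (1 - (w j).re) ≤ ∑ j, a j * δ :=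
          Finset.sum_le_sum fun j _ =>
            mul_le_mul_of_nonneg_left (by linarith [(hw.1 j).2]) (ha j)
      _ = δ := by rw [← Finset.sum_mul, hsum, one_mul]
  refine (Complex.norm_le_abs_re_add_abs_im _).trans ?_
  simp only [Complex.sub_re, Complex.sub_im, Complex.re_sum, Complex.im_sum,
    Complex.re_ofReal_mul, Complex.im_ofReal_mul, Complex.one_re, Complex.one_im, zero_sub, abs_neg]
  rw [hre, abs_of_nonneg hnonneg]
  linarith [hw.2.le]

section SublevelSets

variable {k : ℕ} {α : Fin (k + 1) → ℂ} {N : Fin (k + 1) → ℕ} {β : ℝ}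

theorem exists_Vbeta_norm_weightedPowerSum_sub_lt_le (hβ : -1 < β) (hα : ∑ j, ‖α j‖ = 1)
    (hα0 : ∀ j, α j ≠ 0) (hN : ∀ j, N j ≠ 0) :
    ∃ C : ℝ, 0 ≤ C ∧ ∀ ζ : ℂ, ‖ζ‖ < 1 →
      Vbeta (k + 1) β {z | ‖weightedPowerSum α N z - ζ‖ < 1 - ‖ζ‖} ≤
        .ofReal (C * (1 - ‖ζ‖) ^ slabExponent (k + 1) β) := by
  have hpos (j : Fin (k + 1)) : 0 < ‖α j‖ := norm_pos_iff.2 (hα0 j)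
  have hle_one (j : Fin (k + 1)) : ‖α j‖ ≤ 1 :=
    hα ▸ Finset.single_le_sum (fun i _ => (hpos i).le) (Finset.mem_univ j)
  obtain ⟨i, hi⟩ := Finite.exists_min fun j => ‖α j‖
  have hi0 := hpos i
  have h0 := hpos 0
  refine ⟨2 ^ k / ‖α 0‖ * (4 / ‖α i‖) ^ slabExponent (k + 1) β, by positivity, fun ζ hζ => ?_⟩
  set T : (Fin (k + 1) → ℂ) → Fin (k + 1) → ℂ := fun z j =>
    Complex.exp (((α j).arg - ζ.arg : ℝ) * Complex.I) * z j ^ N j with hT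
  have hδ : 0 < 2 * (1 - ‖ζ‖) / ‖α i‖ := div_pos (by linarith) hi0
  have hsub : ∀ z ∈ polydisc (k + 1), ‖weightedPowerSum α N z - ζ‖ < 1 - ‖ζ‖ →
      T z ∈ boundarySlab (fun j => ‖α j‖) (2 * (1 - ‖ζ‖) / ‖α i‖) := by
    intro z hz hzζ
    refine mem_boundarySlab_of_norm_sum_sub_lt hi0 (hle_one i) hi hα (fun j => ?_) ?_
    · rw [hT, norm_mul, Complex.norm_exp_ofReal_mul_I, one_mul, norm_pow]
      exact pow_lt_one₀ (norm_nonneg _) (hz j) (hN j)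
    · rwa [_root_.sub_sub_cancel, ← norm_weightedPowerSum_sub]
  calc Vbeta (k + 1) β {z | ‖weightedPowerSum α N z - ζ‖ < 1 - ‖ζ‖}
      ≤ Vbeta (k + 1) β (T ⁻¹' boundarySlab (fun j => ‖α j‖) (2 * (1 - ‖ζ‖) / ‖α i‖)) :=
        measure_mono_ae ((ae_mem_polydisc _ _).mono hsub)
    _ = Measure.pi (fun j => powMeasure β ((α j).arg - ζ.arg) (N j))
          (boundarySlab (fun j => ‖α j‖) (2 * (1 - ‖ζ‖) / ‖α i‖)) := by
        rw [← map_Vbeta_rotate_pow _ hβ,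
          Measure.map_apply (by fun_prop) (measurableSet_boundarySlab _ _)]
    _ ≤ .ofReal (2 ^ k / ‖α 0‖ * (2 * (2 * (1 - ‖ζ‖) / ‖α i‖)) ^ slabExponent (k + 1) β) :=
        pi_powMeasure_boundarySlab_le hβ hN h0 (hle_one 0) hδ
    _ = _ := by
        rw [mul_assoc, ← Real.mul_rpow (by positivity) (by linarith)]
        ring_nf

theorem exists_le_Vbeta_norm_one_sub_weightedPowerSum_le (hβ : -1 < β) (hα : ∑ j, ‖α j‖ = 1)
    (hα0 : α 0 ≠ 0) (hN : ∀ j, N j ≠ 0) :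
    ∃ c > 0, ∀ h : ℝ, 0 < h → h ≤ 1 →
      .ofReal (c * h ^ slabExponent (k + 1) β) ≤
        Vbeta (k + 1) β {z | ‖1 - weightedPowerSum α N z‖ ≤ 2 * h} := by
  obtain ⟨c, hc, hle⟩ := exists_le_pi_powMeasure_boundarySlab (φ := fun j => (α j).arg) hβ hN
    (fun j => norm_nonneg (α j)) hα (norm_pos_iff.2 hα0)
  refine ⟨c, hc, fun h hh hh1 => (hle h hh hh1).trans ?_⟩
  rw [← map_Vbeta_rotate_pow _ hβ,
    Measure.map_apply (by fun_prop) (measurableSet_boundarySlab _ _)]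
  refine measure_mono fun z hz => ?_
  have hsum : weightedPowerSum α N z =
      ∑ j, (‖α j‖ : ℂ) * (Complex.exp ((α j).arg * Complex.I) * z j ^ N j) := by
    simpa using weightedPowerSum_eq_exp_mul α N z 0
  rw [mem_ofPred_eq, hsum]
  exact norm_one_sub_sum_le_of_mem_boundarySlab (fun j => norm_nonneg (α j)) hα hz

end SublevelSets

/-! ### The Forelli-Rudin estimate -/

theorem lintegral_rpow_le_of_measure_lt_le {X : Type*} [MeasurableSpace X] (μ : Measure X)
    {f : X → ℝ} (hf0 : 0 ≤ᵐ[μ] f) (hf : AEMeasurable f μ) {R : ℝ} (hR : 0 ≤ R)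
    (hfR : ∀ᵐ x ∂μ, f x ≤ R) {C γ p : ℝ} (hC : 0 ≤ C) (hp : 0 < p) (hγp : γ < p)
    (htail : ∀ t > 0, μ {x | t < f x} ≤ .ofReal (C * t ^ (-γ))) :
    ∫⁻ x, .ofReal (f x ^ p) ∂μ ≤ .ofReal (p * C / (p - γ) * R ^ (p - γ)) := by
  have hle (t : ℝ) (ht : t ∈ Ioi 0) : μ {x | t < f x} * .ofReal (t ^ (p - 1)) ≤
      (Ioc 0 R).indicator (fun t => .ofReal (C * t ^ (p - γ - 1))) t := by
    by_cases htR : t ≤ R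
    · rw [indicator_of_mem (mem_Ioc.2 ⟨ht, htR⟩)]
      refine (mul_le_mul_left (htail t ht) _).trans_eq ?_
      rw [← ofReal_mul (by have := (mem_Ioi.1 ht).le; positivity), mul_assoc,
        ← Real.rpow_add (mem_Ioi.1 ht)]
      ring_nf
    · have hzero : μ {x | t < f x} = 0 := by
        have hnot : ∀ᵐ x ∂μ, ¬ t < f x := hfR.mono fun x hx => not_lt.2 (hx.trans (not_le.1 htR).le)
        simpa only [ae_iff, not_not] using hnot
      rw [hzero, zero_mul]
      exact zero_le
  have hint : IntegrableOn (fun t : ℝ => C * t ^ (p - γ - 1)) (Ioc 0 R) :=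
    (intervalIntegral.intervalIntegrable_rpow' (by linarith)).1.const_mul C
  calc ∫⁻ x, .ofReal (f x ^ p) ∂μ
      = .ofReal p * ∫⁻ t in Ioi 0, μ {x | t < f x} * .ofReal (t ^ (p - 1)) :=
        lintegral_rpow_eq_lintegral_meas_lt_mul μ hf0 hf hp
    _ ≤ .ofReal p * ∫⁻ t in Ioc 0 R, .ofReal (C * t ^ (p - γ - 1)) := by
        refine mul_le_mul_right ?_ _
        rw [← lintegral_indicator measurableSet_Ioc]
        exact (setLIntegral_mono' measurableSet_Ioi hle).trans (setLIntegral_le_lintegral _ _)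
    _ = .ofReal (p * C / (p - γ) * R ^ (p - γ)) := by
        rw [← ofReal_integral_eq_lintegral_ofReal hint ((ae_restrict_mem measurableSet_Ioc).mono
          fun t ht => mul_nonneg hC (Real.rpow_nonneg ht.1.le _)), ← ofReal_mul hp.le,
          integral_const_mul, ← intervalIntegral.integral_of_le hR,
          integral_rpow (Or.inl (by linarith)), sub_add_cancel,
          Real.zero_rpow (sub_pos.2 hγp).ne', sub_zero]
        ring_nf

theorem ae_norm_lt_one_discMeasure (β : ℝ) : ∀ᵐ z ∂discMeasure β, ‖z‖ < 1 := by
  have hball : ∀ᵐ z ∂discMeasure β, z ∈ ball 0 1 :=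
    (withDensity_absolutelyContinuous _ _).ae_le (ae_restrict_mem measurableSet_ball)
  exact hball.mono fun _ => mem_ball_zero_iff.1

theorem discMeasure_norm_one_sub_lt_le {β : ℝ} (hβ : -1 < β) {s : ℝ} (hs : 0 < s) :
    discMeasure β {z | ‖1 - z‖ < s} ≤ .ofReal ((2 * s) ^ (β + 2)) := by
  have := isProbabilityMeasure_discMeasure hβ
  rcases le_total s (1 / 2) with hs2 | hs2
  · have hsub : ∀ z : ℂ, ‖z‖ < 1 → ‖1 - z‖ < s → z ∈ boundaryBox s s 0 := fun z hz hzs => by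
      have hre := (Complex.abs_re_le_norm _).trans_lt hzs
      have him := (Complex.abs_im_le_norm _).trans_lt hzs
      simp only [Complex.sub_re, Complex.sub_im, Complex.one_re, Complex.one_im, zero_sub, abs_neg,
        abs_lt (b := s)] at hre him
      exact ⟨hz, by linarith, by rwa [sub_zero, abs_lt]⟩
    calc discMeasure β {z | ‖1 - z‖ < s} ≤ discMeasure β (boundaryBox s s 0) :=
          measure_mono_ae ((ae_norm_lt_one_discMeasure β).mono hsub)
      _ ≤ .ofReal ((2 * s) ^ (β + 1) * (2 * s)) := by
          rw [← powMeasure_zero_one β]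
          exact powMeasure_boundaryBox_le hβ 0 one_ne_zero hs.le hs2 hs.le 0
      _ = .ofReal ((2 * s) ^ (β + 2)) := by
          rw [← Real.rpow_add_one (by positivity)]
          ring_nf
  · exact prob_le_one.trans (one_le_ofReal.2 (Real.one_le_rpow (by linarith) (by linarith)))

section SzegoKernel

variable {h : ℝ} {z : ℂ}

theorem le_norm_one_sub_mul (hh1 : h ≤ 1) (hz : ‖z‖ ≤ 1) :
    h ≤ ‖1 - ((1 - h : ℝ) : ℂ) * z‖ := by
  have hnorm : ‖((1 - h : ℝ) : ℂ) * z‖ ≤ 1 - h := by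
    rw [norm_mul, Complex.norm_of_nonneg (sub_nonneg.2 hh1)]
    exact mul_le_of_le_one_right (sub_nonneg.2 hh1) hz
  have := norm_sub_norm_le 1 (((1 - h : ℝ) : ℂ) * z)
  rw [norm_one] at this
  linarith

theorem norm_one_sub_mul_le (hh : 0 ≤ h) (hz : ‖z‖ ≤ 1) :
    ‖1 - ((1 - h : ℝ) : ℂ) * z‖ ≤ ‖1 - z‖ + h := by
  calc ‖1 - ((1 - h : ℝ) : ℂ) * z‖ = ‖(1 - z) + h * z‖ := by push_cast; ring_nf
    _ ≤ ‖1 - z‖ + h * ‖z‖ := by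
        refine (norm_add_le _ _).trans_eq ?_
        rw [norm_mul, Complex.norm_of_nonneg hh]
    _ ≤ ‖1 - z‖ + h := by
        gcongr
        exact mul_le_of_le_one_right hh hz

theorem norm_one_sub_le_two_mul (hh : 0 ≤ h) (hh1 : h ≤ 1) (hz : ‖z‖ ≤ 1) :
    ‖1 - z‖ ≤ 2 * ‖1 - ((1 - h : ℝ) : ℂ) * z‖ := by
  calc ‖1 - z‖ = ‖(1 - ((1 - h : ℝ) : ℂ) * z) - h * z‖ := by push_cast; ring_nf
    _ ≤ ‖1 - ((1 - h : ℝ) : ℂ) * z‖ + h * ‖z‖ := by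
        refine (norm_sub_le _ _).trans_eq ?_
        rw [norm_mul, Complex.norm_of_nonneg hh]
    _ ≤ ‖1 - ((1 - h : ℝ) : ℂ) * z‖ + ‖1 - ((1 - h : ℝ) : ℂ) * z‖ := by
        gcongr
        exact (mul_le_of_le_one_right hh hz).trans (le_norm_one_sub_mul hh1 hz)
    _ = 2 * ‖1 - ((1 - h : ℝ) : ℂ) * z‖ := (two_mul _).symm

theorem exists_lintegral_enorm_one_sub_mul_inv_pow_le {β : ℝ} (hβ : -1 < β) {q : ℕ}
    (hq : β + 2 < 2 * q) :
    ∃ C : ℝ, 0 ≤ C ∧ ∀ h : ℝ, 0 < h → h ≤ 1 →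
      ∫⁻ z, ‖((1 - ((1 - h : ℝ) : ℂ) * z) ^ q)⁻¹‖ₑ ^ 2 ∂discMeasure β ≤
        .ofReal (C * h ^ (β + 2 - 2 * q)) := by
  have : 0 < 2 * (q : ℝ) - (β + 2) := sub_pos.2 hq
  refine ⟨2 * q * 4 ^ (β + 2) / (2 * q - (β + 2)), by positivity, fun h hh hh1 => ?_⟩
  set W : ℂ → ℝ := fun z => ‖1 - ((1 - h : ℝ) : ℂ) * z‖
  have hWinv : ∀ᵐ z ∂discMeasure β, (W z)⁻¹ ≤ h⁻¹ :=
    (ae_norm_lt_one_discMeasure β).mono fun z hz => by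
      gcongr
      exact le_norm_one_sub_mul hh1 hz.le
  have htail (t : ℝ) (ht : 0 < t) :
      discMeasure β {z | t < (W z)⁻¹} ≤ .ofReal (4 ^ (β + 2) * t ^ (-(β + 2))) := by
    have hsub : ∀ z : ℂ, ‖z‖ < 1 → t < (W z)⁻¹ → ‖1 - z‖ < 2 * t⁻¹ := fun z hz htz => by
      have hWz : W z < t⁻¹ := (lt_inv_comm₀ (hh.trans_le (le_norm_one_sub_mul hh1 hz.le)) ht).2 htz
      linarith [norm_one_sub_le_two_mul hh.le hh1 hz.le]
    refine (measure_mono_ae ((ae_norm_lt_one_discMeasure β).mono hsub)).trans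
      ((discMeasure_norm_one_sub_lt_le hβ (by positivity)).trans_eq ?_)
    rw [Real.rpow_neg ht.le, ← Real.inv_rpow ht.le,
      ← Real.mul_rpow (by positivity) (inv_nonneg.2 ht.le)]
    ring_nf
  calc ∫⁻ z, ‖((1 - ((1 - h : ℝ) : ℂ) * z) ^ q)⁻¹‖ₑ ^ 2 ∂discMeasure β
      = ∫⁻ z, .ofReal ((W z)⁻¹ ^ (2 * q : ℝ)) ∂discMeasure β := by
        refine lintegral_congr fun z => ?_
        rw [← ofReal_norm, ← ofReal_pow (norm_nonneg _), norm_inv, norm_pow]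
        norm_cast
        rw [mul_comm 2 q, pow_mul, inv_pow (W z)]
    _ ≤ .ofReal (2 * q * 4 ^ (β + 2) / (2 * q - (β + 2)) * h⁻¹ ^ (2 * q - (β + 2))) :=
        lintegral_rpow_le_of_measure_lt_le _ (ae_of_all _ fun z => by positivity) (by fun_prop)
          (by positivity) hWinv (by positivity) (by linarith) hq htail
    _ = .ofReal (2 * q * 4 ^ (β + 2) / (2 * q - (β + 2)) * h ^ (β + 2 - 2 * q)) := by
        rw [Real.inv_rpow hh.le, ← Real.rpow_neg hh.le, neg_sub]

end SzegoKernel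

/-! ### Test functions -/

theorem bddBergman_iff_enorm {n : ℕ} {β : ℝ} {Φ : (Fin n → ℂ) → Fin n → ℂ} :
    bddBergman n β Φ ↔ ∃ C > (0 : ℝ), ∀ f : (Fin n → ℂ) → ℂ, DifferentiableOn ℂ f (polydisc n) →
      ∫⁻ z, ‖f (Φ z)‖ₑ ^ 2 ∂Vbeta n β ≤ .ofReal C * ∫⁻ z, ‖f z‖ₑ ^ 2 ∂Vbeta n β := by
  simp only [bddBergman, ofReal_pow (norm_nonneg _), ofReal_norm]

/-- The test function `∏ i ∈ I, (1 - (1 - h) z i)^{-q}`, which peaks where all the coordinates in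
`I` are within order `h` of `1`. -/
def peakFunction {n : ℕ} (I : Finset (Fin n)) (h : ℝ) (q : ℕ) (z : Fin n → ℂ) : ℂ :=
  ∏ i ∈ I, ((1 - ((1 - h : ℝ) : ℂ) * z i) ^ q)⁻¹

section PeakFunction

variable {n : ℕ} (I : Finset (Fin n)) {h : ℝ} (q : ℕ)

theorem differentiableOn_peakFunction (hh : 0 < h) (hh1 : h ≤ 1) :
    DifferentiableOn ℂ (peakFunction I h q) (polydisc n) := by
  have hfactor (i : Fin n) : DifferentiableOn ℂ
      (fun z : Fin n → ℂ => ((1 - ((1 - h : ℝ) : ℂ) * z i) ^ q)⁻¹) (polydisc n) :=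
    DifferentiableOn.fun_inv (by fun_prop) fun z hz => pow_ne_zero q <| norm_pos_iff.1 <|
      hh.trans_le (le_norm_one_sub_mul hh1 (hz i).le)
  exact fun z hz => (HasFDerivWithinAt.finsetProd fun i _ =>
    (hfactor i z hz).hasFDerivWithinAt).differentiableWithinAt

@[fun_prop]
theorem measurable_peakFunction : Measurable (peakFunction I h q) := by
  unfold peakFunction
  fun_prop

theorem lintegral_enorm_peakFunction_sq {β : ℝ} (hβ : -1 < β) :
    ∫⁻ z, ‖peakFunction I h q z‖ₑ ^ 2 ∂Vbeta n β =
      (∫⁻ z, ‖((1 - ((1 - h : ℝ) : ℂ) * z) ^ q)⁻¹‖ₑ ^ 2 ∂discMeasure β) ^ I.card := by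
  have := isProbabilityMeasure_discMeasure hβ
  set G : ℂ → ℝ≥0∞ := fun z => ‖((1 - ((1 - h : ℝ) : ℂ) * z) ^ q)⁻¹‖ₑ ^ 2 with hG
  have hprod (z : Fin n → ℂ) :
      ‖peakFunction I h q z‖ₑ ^ 2 = ∏ i, (if i ∈ I then G else 1) (z i) := by
    simp only [ite_apply, Pi.one_apply, Finset.prod_ite_mem, Finset.univ_inter]
    simp only [peakFunction, hG, ← ofReal_norm, norm_prod,
      ofReal_prod_of_nonneg fun _ _ => norm_nonneg _, Finset.prod_pow]
  have hint (i : Fin n) : ∫⁻ z, (if i ∈ I then G else 1) z ∂discMeasure β =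
      if i ∈ I then ∫⁻ z, G z ∂discMeasure β else 1 := by
    split_ifs <;> simp
  rw [Vbeta_eq_pi n hβ, lintegral_congr hprod, lintegral_fin_prod_eq_prod]
  · simp only [hint, Finset.prod_ite_mem, Finset.univ_inter, Finset.prod_const]
  · intro i
    split_ifs <;> fun_prop

theorem le_enorm_peakFunction_sq (hh : 0 < h) (hh1 : h ≤ 1) {z : Fin n → ℂ} (hz : z ∈ polydisc n)
    (hzI : ∀ i ∈ I, ‖1 - z i‖ ≤ 2 * h) :
    .ofReal ((((3 * h) ^ q)⁻¹ ^ I.card) ^ 2) ≤ ‖peakFunction I h q z‖ₑ ^ 2 := by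
  rw [← ofReal_norm, ← ofReal_pow (norm_nonneg _)]
  gcongr
  rw [peakFunction, norm_prod, ← Finset.prod_const]
  refine Finset.prod_le_prod (fun i _ => by positivity) fun i hi => ?_
  have hlower := hh.trans_le (le_norm_one_sub_mul hh1 (hz i).le)
  rw [norm_inv, norm_pow]
  gcongr
  linarith [norm_one_sub_mul_le hh.le (hz i).le, hzI i hi]

end PeakFunction

theorem exists_Vbeta_norm_one_sub_le_of_bddBergman {n : ℕ} {β : ℝ} (hβ : -1 < β)
    {Φ : (Fin n → ℂ) → Fin n → ℂ} (hΦm : Measurable Φ)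
    (hΦ : MapsTo Φ (polydisc n) (polydisc n)) (hb : bddBergman n β Φ) (I : Finset (Fin n)) :
    ∃ C : ℝ, ∀ h : ℝ, 0 < h → h ≤ 1 →
      Vbeta n β {z | ∀ i ∈ I, ‖1 - Φ z i‖ ≤ 2 * h} ≤ .ofReal (C * h ^ (I.card * (β + 2))) := by
  obtain ⟨A, hA, hbdd⟩ := bddBergman_iff_enorm.1 hb
  obtain ⟨q, hq⟩ : ∃ q : ℕ, β + 2 < 2 * q := by
    obtain ⟨q, hq⟩ := exists_nat_gt (β + 2)
    exact ⟨q, by linarith [q.cast_nonneg (α := ℝ)]⟩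
  obtain ⟨B, hB, hFR⟩ := exists_lintegral_enorm_one_sub_mul_inv_pow_le hβ hq
  refine ⟨(3 ^ q) ^ (2 * I.card) * A * B ^ I.card, fun h hh hh1 => ?_⟩
  set m : ℝ := (((3 * h) ^ q)⁻¹ ^ I.card) ^ 2 with hm
  have hwindow : ∀ z ∈ polydisc n, (∀ i ∈ I, ‖1 - Φ z i‖ ≤ 2 * h) →
      .ofReal m ≤ ‖peakFunction I h q (Φ z)‖ₑ ^ 2 :=
    fun z hz => le_enorm_peakFunction_sq I q hh hh1 (hΦ hz)
  have hnorm : ∫⁻ z, ‖peakFunction I h q z‖ₑ ^ 2 ∂Vbeta n β ≤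
      .ofReal ((B * h ^ (β + 2 - 2 * q)) ^ I.card) := by
    rw [lintegral_enorm_peakFunction_sq I q hβ, ofReal_pow (by positivity)]
    gcongr
    exact hFR h hh hh1
  calc Vbeta n β {z | ∀ i ∈ I, ‖1 - Φ z i‖ ≤ 2 * h}
      ≤ Vbeta n β {z | .ofReal m ≤ ‖peakFunction I h q (Φ z)‖ₑ ^ 2} :=
        measure_mono_ae ((ae_mem_polydisc n β).mono hwindow)
    _ ≤ (∫⁻ z, ‖peakFunction I h q (Φ z)‖ₑ ^ 2 ∂Vbeta n β) / .ofReal m :=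
        meas_ge_le_lintegral_div (by fun_prop) (ofReal_pos.2 (by positivity)).ne' ofReal_ne_top
    _ ≤ .ofReal A * .ofReal ((B * h ^ (β + 2 - 2 * q)) ^ I.card) / .ofReal m := by
        gcongr
        exact (hbdd _ (differentiableOn_peakFunction I q hh hh1)).trans (by gcongr)
    _ = .ofReal ((3 ^ q) ^ (2 * I.card) * A * B ^ I.card * h ^ (I.card * (β + 2))) := by
        rw [← ofReal_mul hA.le, ← ofReal_div_of_pos (by positivity)]
        congr 1
        have hexp : h ^ (I.card * (β + 2)) =
            (h ^ (β + 2 - 2 * q)) ^ I.card * ((h ^ q) ^ I.card) ^ 2 := by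
          rw [← Real.rpow_natCast (h ^ (β + 2 - 2 * q)), ← Real.rpow_mul hh.le, ← pow_mul,
            ← pow_mul, ← Real.rpow_natCast h, ← Real.rpow_add hh]
          push_cast
          ring_nf
        rw [hm, hexp, mul_pow, mul_pow, inv_pow, inv_pow, div_inv_eq_mul, mul_pow, mul_pow,
          mul_comm 2, pow_mul]
        ring

theorem le_of_forall_mul_rpow_le_mul_rpow {c C p M : ℝ} (hc : 0 < c)
    (hle : ∀ h : ℝ, 0 < h → h ≤ 1 → c * h ^ M ≤ C * h ^ p) : p ≤ M := by
  by_contra! hMp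
  have htend : Tendsto (fun h : ℝ => C * h ^ (p - M)) (𝓝[>] 0) (𝓝 0) := by
    have hcont : Continuous fun h : ℝ => C * h ^ (p - M) :=
      continuous_const.mul (Real.continuous_rpow_const (sub_pos.2 hMp).le)
    simpa [Real.zero_rpow (sub_pos.2 hMp).ne'] using (hcont.tendsto 0).mono_left nhdsWithin_le_nhds
  refine hc.not_ge (ge_of_tendsto htend ?_)
  filter_upwards [Ioc_mem_nhdsGT zero_lt_one] with h hh
  rw [Real.rpow_sub hh.1, ← mul_div_assoc, le_div_iff₀ (Real.rpow_pos_of_pos hh.1 _)]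
  exact hle h hh.1 hh.2

/-! ### The sub-mean value property -/

theorem enorm_pow_mul_two_pi_le_lintegral_circleMap {F : ℂ → ℂ} {c : ℂ} {R : ℝ}
    (hF : DiffContOnCl ℂ F (ball c |R|)) (p : ℕ) :
    ‖F c‖ₑ ^ p * .ofReal (2 * π) ≤ ∫⁻ θ in Ioc 0 (2 * π), ‖F (circleMap c R θ)‖ₑ ^ p := by
  have hpow : DiffContOnCl ℂ (fun z => F z ^ p) (ball c |R|) :=
    (differentiable_pow p).comp_diffContOnCl hF
  have hmean : ∫ θ in Ioc 0 (2 * π), F (circleMap c R θ) ^ p = (2 * π) • F c ^ p := by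
    rw [← hpow.circleAverage, Real.circleAverage_def,
      intervalIntegral.integral_of_le Real.two_pi_pos.le, smul_inv_smul₀ Real.two_pi_pos.ne']
  calc ‖F c‖ₑ ^ p * .ofReal (2 * π) = ‖∫ θ in Ioc 0 (2 * π), F (circleMap c R θ) ^ p‖ₑ := by
        rw [hmean, enorm_smul, enorm_pow, Real.enorm_of_nonneg Real.two_pi_pos.le, mul_comm]
    _ ≤ ∫⁻ θ in Ioc 0 (2 * π), ‖F (circleMap c R θ)‖ₑ ^ p := by
        simpa only [enorm_pow] using enorm_integral_le_lintegral_enorm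
          (μ := volume.restrict (Ioc 0 (2 * π))) fun θ => F (circleMap c R θ) ^ p

theorem volume_preserving_circle_smul {ι : Type*} [Fintype ι] (a : Circle) :
    MeasurePreserving (fun z : ι → ℂ => (a : ℂ) • z) volume volume :=
  volume_preserving_pi fun _ => (rotation a).measurePreserving

/-- Average the one-variable mean value inequality over the complex lines through `c`. -/
theorem enorm_pow_mul_volume_le_setLIntegral {ι : Type*} [Fintype ι] {f : (ι → ℂ) → ℂ}
    {P : Set (ι → ℂ)} {c : ι → ℂ} (hPm : MeasurableSet P) (hP : Balanced ℂ ((c + ·) ⁻¹' P))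
    (hf : DifferentiableOn ℂ f P) (p : ℕ) :
    ‖f c‖ₑ ^ p * volume P ≤ ∫⁻ z in P, ‖f z‖ₑ ^ p := by
  classical
  set F : (ι → ℂ) → ℝ≥0∞ := P.indicator fun z => ‖f z‖ₑ ^ p with hF
  have hFm : Measurable F := by
    rw [hF, ← piecewise_eq_indicator]
    exact ((ENNReal.continuous_pow p).comp_continuousOn hf.continuousOn.enorm).measurable_piecewise
      continuousOn_const hPm
  have hslice (u : ι → ℂ) : ‖f c‖ₑ ^ p * P.indicator 1 (c + u) * .ofReal (2 * π) ≤
      ∫⁻ θ in Ioc 0 (2 * π), F (c + circleMap 0 1 θ • u) := by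
    by_cases hu : c + u ∈ P
    · have hline (l : ℂ) (hl : ‖l‖ ≤ 1) : c + l • u ∈ P := hP l hl (smul_mem_smul_set hu)
      have hdiff : DifferentiableOn ℂ (fun l : ℂ => f (c + l • u)) (closedBall 0 |1|) :=
        hf.comp (by fun_prop) fun l hl => hline l (by simpa using hl)
      simpa [hF, hu, hline, norm_circleMap_zero] using
        enorm_pow_mul_two_pi_le_lintegral_circleMap (hdiff.diffContOnCl_ball subset_rfl) p
    · simp [hu]
  have hrot (θ : ℝ) : ∫⁻ u, F (c + circleMap 0 1 θ • u) = ∫⁻ z in P, ‖f z‖ₑ ^ p := by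
    have hcircle : circleMap 0 1 θ = (Circle.exp θ : ℂ) := by simp [circleMap]
    rw [hcircle, (volume_preserving_circle_smul _).lintegral_comp (f := fun u => F (c + u))
      (by fun_prop), lintegral_add_left_eq_self F, hF, lintegral_indicator hPm]
  refine (ENNReal.mul_le_mul_iff_left (ofReal_pos.2 Real.two_pi_pos).ne' ofReal_ne_top).1 ?_
  calc ‖f c‖ₑ ^ p * volume P * .ofReal (2 * π)
      = ∫⁻ u, ‖f c‖ₑ ^ p * P.indicator 1 (c + u) * .ofReal (2 * π) := by
        have : Measurable (P.indicator (1 : (ι → ℂ) → ℝ≥0∞)) := measurable_one.indicator hPm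
        rw [lintegral_mul_const _ (by fun_prop), lintegral_const_mul _ (by fun_prop),
          lintegral_add_left_eq_self (P.indicator 1), lintegral_indicator_one hPm]
    _ ≤ ∫⁻ u, ∫⁻ θ in Ioc 0 (2 * π), F (c + circleMap 0 1 θ • u) := lintegral_mono hslice
    _ = ∫⁻ θ in Ioc 0 (2 * π), ∫⁻ u, F (c + circleMap 0 1 θ • u) :=
        lintegral_lintegral_swap (by unfold circleMap; fun_prop)
    _ = (∫⁻ z in P, ‖f z‖ₑ ^ p) * .ofReal (2 * π) := by
        simp only [hrot, lintegral_const, Measure.restrict_apply_univ, Real.volume_Ioc, sub_zero]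

/-! ### Whitney polydiscs and the Carleson condition -/

/-- The Whitney polydisc about `c`: in each coordinate its radius is half the distance from `c j`
to the unit circle. -/
def whitneyPolydisc {n : ℕ} (c : Fin n → ℂ) : Set (Fin n → ℂ) :=
  univ.pi fun j => ball (c j) ((1 - ‖c j‖) / 2)

/-- The order of magnitude of the `Vbeta`-measure of a Whitney polydisc containing `z`. -/
def whitneyMass {n : ℕ} (β : ℝ) (z : Fin n → ℂ) : ℝ≥0∞ := ∏ j, .ofReal ((1 - ‖z j‖) ^ (β + 2))

section Whitney

variable {n : ℕ} {β : ℝ}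

@[fun_prop]
theorem measurable_whitneyMass : Measurable (whitneyMass (n := n) β) := by
  unfold whitneyMass
  fun_prop

theorem whitneyMass_ne_zero {z : Fin n → ℂ} (hz : z ∈ polydisc n) : whitneyMass β z ≠ 0 :=
  Finset.prod_ne_zero_iff.2 fun j _ =>
    (ofReal_pos.2 (Real.rpow_pos_of_pos (sub_pos.2 (hz j)) _)).ne'

theorem whitneyMass_ne_top {z : Fin n → ℂ} : whitneyMass β z ≠ ∞ :=
  prod_ne_top fun _ _ => ofReal_ne_top

theorem measurableSet_whitneyPolydisc (c : Fin n → ℂ) : MeasurableSet (whitneyPolydisc c) :=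
  MeasurableSet.univ_pi fun _ => measurableSet_ball

theorem whitneyPolydisc_subset {c : Fin n → ℂ} (hc : c ∈ polydisc n) :
    whitneyPolydisc c ⊆ polydisc n := by
  intro z hz j
  have hball : ‖z j - c j‖ < (1 - ‖c j‖) / 2 := by simpa [dist_eq_norm] using hz j (mem_univ j)
  have := norm_sub_norm_le (z j) (c j)
  have := hc j
  linarith

theorem volume_whitneyPolydisc_ne_top (c : Fin n → ℂ) : volume (whitneyPolydisc c) ≠ ∞ := by
  rw [whitneyPolydisc, volume_pi_pi]
  exact prod_ne_top fun j _ => measure_ball_lt_top.ne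

theorem volume_whitneyPolydisc_ne_zero {c : Fin n → ℂ} (hc : c ∈ polydisc n) :
    volume (whitneyPolydisc c) ≠ 0 := by
  rw [whitneyPolydisc, volume_pi_pi]
  exact Finset.prod_ne_zero_iff.2 fun j _ =>
    (measure_ball_pos _ _ (half_pos (sub_pos.2 (hc j)))).ne'

theorem balanced_preimage_whitneyPolydisc (c : Fin n → ℂ) :
    Balanced ℂ ((c + ·) ⁻¹' whitneyPolydisc c) := by
  rintro a ha _ ⟨u, hu, rfl⟩ j hj
  have hball : ‖u j‖ < (1 - ‖c j‖) / 2 := by simpa [dist_eq_norm] using hu j hj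
  simpa [dist_eq_norm] using (mul_le_of_le_one_left (norm_nonneg (u j)) ha).trans_lt hball

theorem min_one_two_rpow_mul_le_one_sub_sq_rpow (β : ℝ) {t : ℝ} (ht : 0 ≤ t) (ht1 : t < 1) :
    min 1 (2 ^ β) * (1 - t) ^ β ≤ (1 - t ^ 2) ^ β := by
  have hd : 0 < 1 - t := sub_pos.2 ht1
  have hfactor : 1 - t ^ 2 = (1 + t) * (1 - t) := by ring
  rw [hfactor, Real.mul_rpow (by positivity) hd.le]
  gcongr
  rcases le_total 0 β with h | h
  · exact (min_le_left _ _).trans (Real.one_le_rpow (by linarith) h)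
  · exact (min_le_right _ _).trans (Real.rpow_le_rpow_of_nonpos (by positivity) (by linarith) h)

theorem exists_rpow_le_mul_volume_ball_mul_discDensity (hβ : -1 < β) :
    ∃ C : ℝ, ∀ c ζ : ℂ, ‖c‖ < 1 → ζ ∈ ball c ((1 - ‖c‖) / 2) →
      .ofReal ((1 - ‖ζ‖) ^ (β + 2)) ≤
        .ofReal C * (volume (ball c ((1 - ‖c‖) / 2)) * discDensity β ζ) := by
  have : 0 < min 1 ((2 : ℝ) ^ β) := by positivity
  have hβ' : 0 < β + 1 := by linarith
  refine ⟨9 / ((β + 1) * min 1 (2 ^ β)), fun c ζ hc hζ => ?_⟩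
  rw [mem_ball, dist_eq_norm] at hζ
  have hlower := norm_sub_norm_le ζ c
  have hupper := norm_sub_norm_le c ζ
  rw [norm_sub_rev] at hupper
  have hd : 0 < 1 - ‖ζ‖ := by linarith
  have hdensity := min_one_two_rpow_mul_le_one_sub_sq_rpow β (norm_nonneg ζ) (sub_pos.1 hd)
  have hvolume : volume (ball c ((1 - ‖c‖) / 2)) = .ofReal (π * ((1 - ‖c‖) / 2) ^ 2) := by
    rw [Complex.volume_ball, ← ofReal_coe_nnreal, NNReal.coe_real_pi, mul_comm,
      ofReal_mul Real.pi_nonneg, ofReal_pow (by linarith)]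
  rw [hvolume, discDensity, ← ofReal_mul (by positivity), ← ofReal_mul (by positivity)]
  refine ofReal_le_ofReal ?_
  calc (1 - ‖ζ‖) ^ (β + 2)
      = 9 / (β + 1) * (min 1 (2 ^ β))⁻¹ * (β + 1) * ((1 - ‖ζ‖) / 3) ^ 2 *
          (min 1 (2 ^ β) * (1 - ‖ζ‖) ^ β) := by
        rw [Real.rpow_add hd, Real.rpow_two]
        field_simp
        norm_num
    _ ≤ 9 / (β + 1) * (min 1 (2 ^ β))⁻¹ * (β + 1) * ((1 - ‖c‖) / 2) ^ 2 *
          (1 - ‖ζ‖ ^ 2) ^ β := by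
        gcongr ?_ * ?_ ^ 2 * ?_
        linarith
    _ = 9 / ((β + 1) * min 1 (2 ^ β)) *
          (π * ((1 - ‖c‖) / 2) ^ 2 * ((β + 1) * (1 - ‖ζ‖ ^ 2) ^ β / π)) := by
        field_simp

theorem exists_whitneyMass_le_mul_volume_whitneyPolydisc (n : ℕ) (hβ : -1 < β) :
    ∃ C : ℝ, ∀ c ∈ polydisc n, ∀ z ∈ whitneyPolydisc c,
      whitneyMass β z ≤ .ofReal C * (volume (whitneyPolydisc c) * ∏ j, discDensity β (z j)) := by
  obtain ⟨C, hC⟩ := exists_rpow_le_mul_volume_ball_mul_discDensity hβ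
  refine ⟨max C 0 ^ n, fun c hc z hz => ?_⟩
  calc whitneyMass β z
      ≤ ∏ j, .ofReal C * (volume (ball (c j) ((1 - ‖c j‖) / 2)) * discDensity β (z j)) :=
        Finset.prod_le_prod' fun j _ => hC (c j) (z j) (hc j) (hz j (mem_univ j))
    _ = .ofReal (max C 0 ^ n) * (volume (whitneyPolydisc c) * ∏ j, discDensity β (z j)) := by
        rw [Finset.prod_mul_distrib, Finset.prod_mul_distrib, whitneyPolydisc, volume_pi_pi,
          Finset.prod_const, Finset.card_univ, Fintype.card_fin, ofReal_pow (le_max_right _ _),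
          ofReal_max, ofReal_zero, max_zero]

theorem setLIntegral_Vbeta (hβ : -1 < β) {s : Set (Fin n → ℂ)} (hs : MeasurableSet s)
    (hsub : s ⊆ polydisc n) (g : (Fin n → ℂ) → ℝ≥0∞) :
    ∫⁻ z in s, g z ∂Vbeta n β = ∫⁻ z in s, (∏ j, discDensity β (z j)) * g z := by
  have hfinite (z : Fin n → ℂ) : ∏ j, discDensity β (z j) < ∞ :=
    prod_lt_top fun _ _ => ofReal_lt_top
  rw [Vbeta_eq_withDensity n hβ, setLIntegral_withDensity_eq_setLIntegral_mul_non_measurable _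
      (by fun_prop) _ hs (ae_of_all _ hfinite), Measure.restrict_restrict_of_subset hsub]
  rfl

/-- The weight sits under the integral, evaluated at the integration variable, so that integrating
in `c` leaves the measure of a set of `c`. -/
theorem exists_enorm_pow_le_setLIntegral_whitneyPolydisc (n : ℕ) (hβ : -1 < β) (p : ℕ) :
    ∃ C : ℝ, ∀ f : (Fin n → ℂ) → ℂ, DifferentiableOn ℂ f (polydisc n) → ∀ c ∈ polydisc n,
      ‖f c‖ₑ ^ p ≤ .ofReal C *
        ∫⁻ z in whitneyPolydisc c, (whitneyMass β z)⁻¹ * ‖f z‖ₑ ^ p ∂Vbeta n β := by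
  obtain ⟨C, hC⟩ := exists_whitneyMass_le_mul_volume_whitneyPolydisc n hβ
  refine ⟨C, fun f hf c hc => ?_⟩
  have hsub := whitneyPolydisc_subset hc
  have hm := measurableSet_whitneyPolydisc c
  have hfinite := volume_whitneyPolydisc_ne_top c
  have hone (z : Fin n → ℂ) (hz : z ∈ whitneyPolydisc c) :
      1 ≤ .ofReal C * (volume (whitneyPolydisc c) * ∏ j, discDensity β (z j)) *
        (whitneyMass β z)⁻¹ := by
    rw [← ENNReal.mul_inv_cancel (whitneyMass_ne_zero (hsub hz)) whitneyMass_ne_top]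
    exact mul_le_mul_left (hC c hc z hz) _
  refine (ENNReal.mul_le_mul_iff_left (volume_whitneyPolydisc_ne_zero hc) hfinite).1 ?_
  rw [setLIntegral_Vbeta hβ hm hsub]
  calc ‖f c‖ₑ ^ p * volume (whitneyPolydisc c)
      ≤ ∫⁻ z in whitneyPolydisc c, ‖f z‖ₑ ^ p :=
        enorm_pow_mul_volume_le_setLIntegral hm (balanced_preimage_whitneyPolydisc c)
          (hf.mono hsub) p
    _ ≤ ∫⁻ z in whitneyPolydisc c, .ofReal C * volume (whitneyPolydisc c) *
          ((∏ j, discDensity β (z j)) * ((whitneyMass β z)⁻¹ * ‖f z‖ₑ ^ p)) := by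
        refine setLIntegral_mono' hm fun z hz => ?_
        refine (le_mul_of_one_le_left zero_le (hone z hz)).trans_eq ?_
        ring
    _ = .ofReal C * (∫⁻ z in whitneyPolydisc c,
          (∏ j, discDensity β (z j)) * ((whitneyMass β z)⁻¹ * ‖f z‖ₑ ^ p)) *
            volume (whitneyPolydisc c) := by
        rw [lintegral_const_mul' _ _ (mul_ne_top ofReal_ne_top hfinite), mul_right_comm]

theorem lintegral_setLIntegral_swap {X Y : Type*} [MeasurableSpace X] [MeasurableSpace Y]
    {μ : Measure X} {ν : Measure Y} [SFinite μ] [SFinite ν] {T : Set (X × Y)}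
    (hT : MeasurableSet T) {w : Y → ℝ≥0∞} (hw : AEMeasurable w ν) :
    ∫⁻ x, ∫⁻ y in {y | (x, y) ∈ T}, w y ∂ν ∂μ = ∫⁻ y, μ {x | (x, y) ∈ T} * w y ∂ν := by
  calc ∫⁻ x, ∫⁻ y in {y | (x, y) ∈ T}, w y ∂ν ∂μ
      = ∫⁻ x, ∫⁻ y, T.indicator (fun p => w p.2) (x, y) ∂ν ∂μ :=
        lintegral_congr fun x => (lintegral_indicator (hT.preimage measurable_prodMk_left) w).symm
    _ = ∫⁻ y, ∫⁻ x, T.indicator (fun p => w p.2) (x, y) ∂μ ∂ν :=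
        lintegral_lintegral_swap (f := fun x y => T.indicator (fun p => w p.2) (x, y))
          (hw.comp_snd.indicator hT)
    _ = ∫⁻ y, μ {x | (x, y) ∈ T} * w y ∂ν := lintegral_congr fun y =>
        (lintegral_indicator_const (hT.preimage measurable_prodMk_right) (w y)).trans (mul_comm _ _)

theorem aemeasurable_Vbeta_of_differentiableOn {f : (Fin n → ℂ) → ℂ}
    (hf : DifferentiableOn ℂ f (polydisc n)) : AEMeasurable f (Vbeta n β) :=
  (hf.continuousOn.aemeasurable (isOpen_polydisc n).measurableSet).mono_ac
    (withDensity_absolutelyContinuous _ _)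

theorem measurableSet_mem_whitneyPolydisc {X : Type*} [MeasurableSpace X]
    {Φ : X → Fin n → ℂ} (hΦ : Measurable Φ) :
    MeasurableSet {p : X × (Fin n → ℂ) | p.2 ∈ whitneyPolydisc (Φ p.1)} := by
  simp only [whitneyPolydisc, mem_univ_pi, mem_ball, ofPred_forall]
  exact MeasurableSet.iInter fun j => measurableSet_lt
    (f := fun p : X × (Fin n → ℂ) => dist (p.2 j) (Φ p.1 j))
    (g := fun p : X × (Fin n → ℂ) => (1 - ‖Φ p.1 j‖) / 2) (by fun_prop) (by fun_prop)

theorem bddBergman_of_Vbeta_mem_whitneyPolydisc_le (hβ : -1 < β) {Φ : (Fin n → ℂ) → Fin n → ℂ}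
    (hΦm : Measurable Φ) (hΦ : MapsTo Φ (polydisc n) (polydisc n)) {C : ℝ}
    (hC : ∀ ζ ∈ polydisc n,
      Vbeta n β {z | ζ ∈ whitneyPolydisc (Φ z)} ≤ .ofReal C * whitneyMass β ζ) :
    bddBergman n β Φ := by
  have := isProbabilityMeasure_Vbeta n hβ
  obtain ⟨K, hK⟩ := exists_enorm_pow_le_setLIntegral_whitneyPolydisc n hβ 2
  refine bddBergman_iff_enorm.2 ⟨max K 0 * max C 0 + 1, by positivity, fun f hf => ?_⟩
  set w : (Fin n → ℂ) → ℝ≥0∞ := fun ζ => (whitneyMass β ζ)⁻¹ * ‖f ζ‖ₑ ^ 2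
  have hw : AEMeasurable w (Vbeta n β) :=
    (by fun_prop : Measurable (whitneyMass β)⁻¹).aemeasurable.mul
      ((aemeasurable_Vbeta_of_differentiableOn hf).enorm.pow_const 2)
  calc ∫⁻ z, ‖f (Φ z)‖ₑ ^ 2 ∂Vbeta n β
      ≤ ∫⁻ z, .ofReal K * ∫⁻ ζ in whitneyPolydisc (Φ z), w ζ ∂Vbeta n β ∂Vbeta n β := by
        refine lintegral_mono_ae ?_
        filter_upwards [ae_mem_polydisc n β] with z hz using hK f hf _ (hΦ hz)
    _ = .ofReal K * ∫⁻ ζ, Vbeta n β {z | ζ ∈ whitneyPolydisc (Φ z)} * w ζ ∂Vbeta n β := by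
        rw [lintegral_const_mul' _ _ ofReal_ne_top]
        exact congrArg _ (lintegral_setLIntegral_swap (measurableSet_mem_whitneyPolydisc hΦm) hw)
    _ ≤ .ofReal K * ∫⁻ ζ, .ofReal C * ‖f ζ‖ₑ ^ 2 ∂Vbeta n β := by
        refine mul_le_mul_right (lintegral_mono_ae ?_) _
        filter_upwards [ae_mem_polydisc n β] with ζ hζ
        refine (mul_le_mul_left (hC ζ hζ) _).trans_eq ?_
        rw [mul_assoc, ← mul_assoc (whitneyMass β ζ),
          ENNReal.mul_inv_cancel (whitneyMass_ne_zero hζ) whitneyMass_ne_top, one_mul]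
    _ ≤ .ofReal (max K 0 * max C 0 + 1) * ∫⁻ ζ, ‖f ζ‖ₑ ^ 2 ∂Vbeta n β := by
        rw [lintegral_const_mul' _ _ ofReal_ne_top, ← mul_assoc]
        refine mul_le_mul_left ?_ _
        rw [ofReal_add (by positivity) zero_le_one, ofReal_mul (le_max_right _ _)]
        exact le_add_right (mul_le_mul' (ofReal_le_ofReal (le_max_left _ _))
          (ofReal_le_ofReal (le_max_left _ _)))

end Whitney

/-! ### Composition with a power sum symbol -/

/-- The self-map of the polydisc whose coordinates are `weightedPowerSum α N` in the positions
listed in `I` and `0` in all others. -/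
def powerSumSymbol {n : ℕ} (I : Finset (Fin n)) (α : Fin n → ℂ) (N : Fin n → ℕ)
    (z : Fin n → ℂ) (i : Fin n) : ℂ :=
  if i ∈ I then weightedPowerSum α N z else 0

section PowerSumSymbol

variable {n : ℕ} {I : Finset (Fin n)} {α : Fin n → ℂ} {N : Fin n → ℕ} {β : ℝ}

theorem measurable_powerSumSymbol : Measurable (powerSumSymbol I α N) := by
  refine measurable_pi_lambda _ fun i => ?_
  by_cases hi : i ∈ I
  · simpa only [powerSumSymbol, if_pos hi] using measurable_weightedPowerSum α N
  · simp only [powerSumSymbol, if_neg hi, measurable_const]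

theorem mapsTo_powerSumSymbol (hα : ∑ j, ‖α j‖ = 1) (hN : ∀ j, N j ≠ 0) :
    MapsTo (powerSumSymbol I α N) (polydisc n) (polydisc n) := by
  intro z hz i
  by_cases hi : i ∈ I
  · simpa only [powerSumSymbol, if_pos hi] using norm_weightedPowerSum_lt_one hα hN hz
  · simp [powerSumSymbol, hi]

theorem norm_weightedPowerSum_sub_lt_of_mem_whitneyPolydisc {z ζ : Fin n → ℂ} {i : Fin n}
    (hi : i ∈ I) (hζ : ζ ∈ whitneyPolydisc (powerSumSymbol I α N z)) :
    ‖weightedPowerSum α N z - ζ i‖ < 1 - ‖ζ i‖ := by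
  have hball : ‖ζ i - weightedPowerSum α N z‖ < (1 - ‖weightedPowerSum α N z‖) / 2 := by
    simpa [powerSumSymbol, hi, dist_eq_norm] using hζ i (mem_univ i)
  have := norm_sub_norm_le (ζ i) (weightedPowerSum α N z)
  rw [norm_sub_rev]
  linarith

theorem norm_lt_half_of_mem_whitneyPolydisc {z ζ : Fin n → ℂ} {i : Fin n} (hi : i ∉ I)
    (hζ : ζ ∈ whitneyPolydisc (powerSumSymbol I α N z)) : ‖ζ i‖ < 1 / 2 := by
  simpa [powerSumSymbol, hi] using hζ i (mem_univ i)

theorem prod_rpow_le_mul_whitneyMass (hβ : -1 < β) {ζ : Fin n → ℂ} (hζ : ζ ∈ polydisc n)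
    (hζI : ∀ i ∉ I, ‖ζ i‖ < 1 / 2) :
    .ofReal (∏ i ∈ I, (1 - ‖ζ i‖) ^ (β + 2)) ≤
      .ofReal ((2 ^ (β + 2)) ^ n) * whitneyMass β ζ := by
  have hβ' : 0 ≤ β + 2 := by linarith
  have hd (i : Fin n) : 0 ≤ 1 - ‖ζ i‖ := (sub_pos.2 (hζ i)).le
  have hfactor (i : Fin n) : (if i ∈ I then (1 - ‖ζ i‖) ^ (β + 2) else 1) ≤
      2 ^ (β + 2) * (1 - ‖ζ i‖) ^ (β + 2) := by
    split_ifs with hi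
    · exact le_mul_of_one_le_left (Real.rpow_nonneg (hd i) _)
        (Real.one_le_rpow one_le_two hβ')
    · rw [← Real.mul_rpow zero_le_two (hd i)]
      exact Real.one_le_rpow (by linarith [hζI i hi]) hβ'
  rw [whitneyMass, ← ofReal_prod_of_nonneg fun i _ => Real.rpow_nonneg (hd i) _,
    ← ofReal_mul (by positivity)]
  refine ofReal_le_ofReal ?_
  calc ∏ i ∈ I, (1 - ‖ζ i‖) ^ (β + 2)
      = ∏ i, if i ∈ I then (1 - ‖ζ i‖) ^ (β + 2) else 1 := by
        rw [Finset.prod_ite_mem, Finset.univ_inter]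
    _ ≤ ∏ i, 2 ^ (β + 2) * (1 - ‖ζ i‖) ^ (β + 2) := by
        refine Finset.prod_le_prod (fun i _ => ?_) fun i _ => hfactor i
        have := hd i
        positivity
    _ = (2 ^ (β + 2)) ^ n * ∏ i, (1 - ‖ζ i‖) ^ (β + 2) := by
        rw [Finset.prod_mul_distrib, Finset.prod_const, Finset.card_univ, Fintype.card_fin]

end PowerSumSymbol

section Boundedness

variable {k : ℕ} {I : Finset (Fin (k + 1))} {α : Fin (k + 1) → ℂ} {N : Fin (k + 1) → ℕ} {β : ℝ}

theorem exists_Vbeta_forall_norm_weightedPowerSum_sub_lt_le (hβ : -1 < β) (hα : ∑ j, ‖α j‖ = 1)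
    (hα0 : ∀ j, α j ≠ 0) (hN : ∀ j, N j ≠ 0)
    (hI : I.card * (β + 2) ≤ slabExponent (k + 1) β) :
    ∃ C : ℝ, 0 ≤ C ∧ ∀ ζ ∈ polydisc (k + 1),
      Vbeta (k + 1) β {z | ∀ i ∈ I, ‖weightedPowerSum α N z - ζ i‖ < 1 - ‖ζ i‖} ≤
        .ofReal (C * ∏ i ∈ I, (1 - ‖ζ i‖) ^ (β + 2)) := by
  rcases I.eq_empty_or_nonempty with rfl | hne
  · have := isProbabilityMeasure_Vbeta (k + 1) hβ
    exact ⟨1, zero_le_one, fun ζ _ => by simp⟩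
  obtain ⟨C, hC0, hC⟩ := exists_Vbeta_norm_weightedPowerSum_sub_lt_le hβ hα hα0 hN
  refine ⟨C, hC0, fun ζ hζ => ?_⟩
  obtain ⟨i₀, hi₀, hmin⟩ := I.exists_min_image (fun i => 1 - ‖ζ i‖) hne
  have hd : 0 < 1 - ‖ζ i₀‖ := sub_pos.2 (hζ i₀)
  have hβ' : 0 ≤ β + 2 := by linarith
  calc Vbeta (k + 1) β {z | ∀ i ∈ I, ‖weightedPowerSum α N z - ζ i‖ < 1 - ‖ζ i‖}
      ≤ Vbeta (k + 1) β {z | ‖weightedPowerSum α N z - ζ i₀‖ < 1 - ‖ζ i₀‖} :=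
        measure_mono fun z hz => hz i₀ hi₀
    _ ≤ .ofReal (C * (1 - ‖ζ i₀‖) ^ slabExponent (k + 1) β) := hC _ (hζ i₀)
    _ ≤ .ofReal (C * ∏ i ∈ I, (1 - ‖ζ i‖) ^ (β + 2)) := by
        refine ofReal_le_ofReal (mul_le_mul_of_nonneg_left ?_ hC0)
        calc (1 - ‖ζ i₀‖) ^ slabExponent (k + 1) β
            ≤ (1 - ‖ζ i₀‖) ^ (I.card * (β + 2)) :=
              Real.rpow_le_rpow_of_exponent_ge hd (by linarith [norm_nonneg (ζ i₀)]) hI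
          _ = ∏ i ∈ I, (1 - ‖ζ i₀‖) ^ (β + 2) := by
              rw [Finset.prod_const, mul_comm, Real.rpow_mul_natCast hd.le]
          _ ≤ ∏ i ∈ I, (1 - ‖ζ i‖) ^ (β + 2) := Finset.prod_le_prod
              (fun i _ => by positivity) fun i hi => Real.rpow_le_rpow hd.le (hmin i hi) hβ'

theorem bddBergman_powerSumSymbol (hβ : -1 < β) (hα : ∑ j, ‖α j‖ = 1)
    (hα0 : ∀ j, α j ≠ 0) (hN : ∀ j, N j ≠ 0)
    (hI : I.card * (β + 2) ≤ slabExponent (k + 1) β) :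
    bddBergman (k + 1) β (powerSumSymbol I α N) := by
  obtain ⟨C, hC0, hC⟩ := exists_Vbeta_forall_norm_weightedPowerSum_sub_lt_le hβ hα hα0 hN hI
  refine bddBergman_of_Vbeta_mem_whitneyPolydisc_le hβ measurable_powerSumSymbol
    (mapsTo_powerSumSymbol hα hN) (C := C * (2 ^ (β + 2)) ^ (k + 1)) fun ζ hζ => ?_
  obtain hempty | ⟨w, hw : ζ ∈ whitneyPolydisc (powerSumSymbol I α N w)⟩ :=
    {z | ζ ∈ whitneyPolydisc (powerSumSymbol I α N z)}.eq_empty_or_nonempty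
  · simp [hempty]
  have hζI (i : Fin (k + 1)) (hi : i ∉ I) : ‖ζ i‖ < 1 / 2 :=
    norm_lt_half_of_mem_whitneyPolydisc hi hw
  calc Vbeta (k + 1) β {z | ζ ∈ whitneyPolydisc (powerSumSymbol I α N z)}
      ≤ Vbeta (k + 1) β {z | ∀ i ∈ I, ‖weightedPowerSum α N z - ζ i‖ < 1 - ‖ζ i‖} :=
        measure_mono fun z hz i hi => norm_weightedPowerSum_sub_lt_of_mem_whitneyPolydisc hi hz
    _ ≤ .ofReal C * .ofReal (∏ i ∈ I, (1 - ‖ζ i‖) ^ (β + 2)) :=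
        (hC ζ hζ).trans_eq (ofReal_mul hC0)
    _ ≤ .ofReal (C * (2 ^ (β + 2)) ^ (k + 1)) * whitneyMass β ζ := by
        rw [ofReal_mul hC0, mul_assoc]
        gcongr
        exact prod_rpow_le_mul_whitneyMass hβ hζ hζI

theorem card_mul_le_slabExponent_of_bddBergman (hβ : -1 < β) (hα : ∑ j, ‖α j‖ = 1)
    (hα0 : α 0 ≠ 0) (hN : ∀ j, N j ≠ 0) (hb : bddBergman (k + 1) β (powerSumSymbol I α N)) :
    I.card * (β + 2) ≤ slabExponent (k + 1) β := by
  obtain ⟨c, hc, hlower⟩ := exists_le_Vbeta_norm_one_sub_weightedPowerSum_le hβ hα hα0 hN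
  obtain ⟨C, hupper⟩ := exists_Vbeta_norm_one_sub_le_of_bddBergman hβ measurable_powerSumSymbol
    (mapsTo_powerSumSymbol hα hN) hb I
  refine le_of_forall_mul_rpow_le_mul_rpow (C := C) hc fun h hh hh1 => ?_
  have hpos : 0 < c * h ^ slabExponent (k + 1) β := by positivity
  refine (ofReal_le_ofReal_iff'.1 ?_).resolve_right hpos.not_ge
  calc ENNReal.ofReal (c * h ^ slabExponent (k + 1) β)
      ≤ Vbeta (k + 1) β {z | ‖1 - weightedPowerSum α N z‖ ≤ 2 * h} := hlower h hh hh1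
    _ ≤ Vbeta (k + 1) β {z | ∀ i ∈ I, ‖1 - powerSumSymbol I α N z i‖ ≤ 2 * h} :=
        measure_mono fun z hz i hi => by
          rw [powerSumSymbol, if_pos hi]; exact hz
    _ ≤ .ofReal (C * h ^ (I.card * (β + 2))) := hupper h hh hh1

end Boundedness

theorem sum_of_powers_symbol_boundedness_general {n : ℕ} (I : Finset (Fin n)) {α : Fin n → ℂ}
    (hα : ∑ j, ‖α j‖ = 1) (hα0 : ∀ j, α j ≠ 0) {N : Fin n → ℕ} (hN : ∀ j, N j ≠ 0) {β : ℝ}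
    (hβ : -1 < β) :
    bddBergman n β (powerSumSymbol I α N) ↔ I.card * (β + 2) ≤ n * (β + 1) + (n + 1) / 2 := by
  obtain _ | k := n
  · simp at hα
  · exact ⟨card_mul_le_slabExponent_of_bddBergman hβ hα (hα0 0) hN,
      bddBergman_powerSumSymbol hβ hα hα0 hN⟩

theorem pred_mul_le_slabExponent_iff {n : ℕ} (hn : n ≠ 0) {β : ℝ} :
    ((n - 1 : ℕ) : ℝ) * (β + 2) ≤ n * (β + 1) + (n + 1) / 2 ↔ (n : ℝ) / 2 ≤ β + 5 / 2 := by
  rw [Nat.cast_pred (Nat.pos_of_ne_zero hn)]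
  constructor <;> intro h <;> linarith

end Development

theorem sum_of_powers_symbol_boundedness (n : ℕ) (hn : 2 ≤ n) (α : Fin n → ℂ)
    (hα : ∑ j, ‖α j‖ = 1) (hα0 : ∀ j, α j ≠ 0) (β : ℝ) (hβ : -1 < β) :
    bddBergman n β (fun z i => if (i : ℕ) < n - 1 then ∑ j, α j * z j ^ n else 0) ↔
      (n : ℝ) / 2 ≤ β + 5 / 2 := by
  rw [← pred_mul_le_slabExponent_iff (by lia)]
  simpa +unfoldPartialApp [powerSumSymbol, weightedPowerSum, Fin.card_filter_val_lt] using
    sum_of_powers_symbol_boundedness_general {i | (i : ℕ) < n - 1} hα hα0 (N := fun _ => n)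
      (fun _ => by lia) hβ

end
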